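/- Let χ ≥ 0, 0 ≤ ξ < (χ+1)/2 and σ > 0. There exist constants 0 < c ≤ C and λ₀ > 0 such that: for every eigenpair (λ, φ) of the Laplace kernel with respect to p with 0 < λ < λ₀, with φ odd (φ(−x) = −φ(x)) and normalized so that ∫_ℝ p(x) φ(x)² dx = 1, the coefficient c_φ = ∫_ℝ p(x) f*_ξ(x) φ(x) dx satisfies c · λ^{(3χ/4 + 1 − ξ)/(χ+2)} ≤ |c_φ| ≤ C · λ^{(3χ/4 + 1 − ξ)/(χ+2)}. -/

import Mathlib

open MeasureTheory Real

/-- The data density `p(x) = |x|^χ e^{-x²} / Γ((1+χ)/2)`. -/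
noncomputable def dataDensity (χ : ℝ) (x : ℝ) : ℝ :=
  |x| ^ χ * Real.exp (-x ^ 2) / Real.Gamma ((1 + χ) / 2)

/-- The target function `f*_ξ(x) = sign(x) |x|^{-ξ}`. -/
noncomputable def targetFun (ξ : ℝ) (x : ℝ) : ℝ :=
  Real.sign x * |x| ^ (-ξ)

/-!
The Laplace kernel is a Green function, so an eigenfunction solves
`φ'' + (2 p / (σ λ) - 1 / σ ^ 2) φ = 0`. An odd one is determined by its slope at `0`, and on the
length scale `ℓ ~ λ ^ (1 / (χ + 2))` it is a multiple of the solution of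
`u'' + (w - κ ε) u = 0`, `u 0 = 0`, `u' 0 = 1`, where `w t = t ^ χ * exp (-ε t ^ 2)`,
`ε = ℓ ^ 2` and `κ = 1 / σ ^ 2`. It remains to find, as `ε → 0`, the sizes of two integrals.

* `∫ w u²`. Beyond a fixed point the WKB energy `h u'² + u² / h`, `h = w ^ (-1/2)`, stays between
  two positive constants up to far beyond `ε ^ (-1/2)`. Hence `w u²` is on average of size
  `h⁻¹ = w ^ (1/2)`, whose integral is of order `ε ^ (-(χ + 2) / 4)`.
* `∫ t ^ (-ξ) w u`. Here `w u ≈ -u''`, so the oscillating part is almost a total derivative. On the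
  arch up to the first critical point `x₁` of `u` the integral is at least a constant, and
  integration by parts shows that the contribution after `x₁` is nonnegative up to an error tending
  to `0`.

Eliminating the slope through the normalization gives a coefficient of order
`ℓ ^ (3 χ / 4 + 1 - ξ)`.
-/

open scoped Topology

/-! ### Linear oscillators -/

section Calculus

variable {f g f' g' p p' : ℝ → ℝ} {a b : ℝ}

theorem sub_le_sub_of_hasDerivAt_le (hab : a ≤ b)
    (hf : ∀ x ∈ Set.Icc a b, HasDerivAt f (f' x) x)
    (hg : ∀ x ∈ Set.Icc a b, HasDerivAt g (g' x) x)
    (hle : ∀ x ∈ Set.Icc a b, f' x ≤ g' x) : f b - f a ≤ g b - g a := by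
  have hderiv : ∀ x ∈ Set.Icc a b, HasDerivAt (fun x ↦ g x - f x) (g' x - f' x) x :=
    fun x hx ↦ (hg x hx).sub (hf x hx)
  have hmono : MonotoneOn (fun x ↦ g x - f x) (Set.Icc a b) := by
    refine monotoneOn_of_deriv_nonneg (convex_Icc a b)
      (fun x hx ↦ (hderiv x hx).continuousAt.continuousWithinAt)
      (fun x hx ↦ (hderiv x (interior_subset hx)).differentiableAt.differentiableWithinAt)
      fun x hx ↦ ?_
    rw [(hderiv x (interior_subset hx)).deriv]
    exact sub_nonneg.2 (hle x (interior_subset hx))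
  linarith [hmono (Set.left_mem_Icc.2 hab) (Set.right_mem_Icc.2 hab) hab]

theorem le_of_hasDerivAt_nonneg (hab : a ≤ b)
    (hf : ∀ x ∈ Set.Icc a b, HasDerivAt f (f' x) x) (h0 : ∀ x ∈ Set.Icc a b, 0 ≤ f' x) :
    f a ≤ f b := by
  linarith [sub_le_sub_of_hasDerivAt_le hab (fun x _ ↦ hasDerivAt_const x (0 : ℝ)) hf h0]

theorem ge_of_hasDerivAt_nonpos (hab : a ≤ b)
    (hf : ∀ x ∈ Set.Icc a b, HasDerivAt f (f' x) x) (h0 : ∀ x ∈ Set.Icc a b, f' x ≤ 0) :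
    f b ≤ f a := by
  linarith [sub_le_sub_of_hasDerivAt_le hab hf (fun x _ ↦ hasDerivAt_const x (0 : ℝ)) h0]

theorem le_exp_mul_of_deriv_le_mul (hab : a ≤ b)
    (hf : ∀ x ∈ Set.Icc a b, HasDerivAt f (f' x) x)
    (hp : ∀ x ∈ Set.Icc a b, HasDerivAt p (p' x) x)
    (hle : ∀ x ∈ Set.Icc a b, f' x ≤ p' x * f x) : f b ≤ rexp (p b - p a) * f a := by
  have hanti : rexp (-p b) * f b ≤ rexp (-p a) * f a :=
    ge_of_hasDerivAt_nonpos (f := fun x ↦ rexp (-p x) * f x) hab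
      (fun x hx ↦ (hp x hx).fun_neg.exp.mul (hf x hx)) fun x hx ↦ by
        nlinarith [mul_le_mul_of_nonneg_left (hle x hx) (exp_pos (-p x)).le]
  calc f b = rexp (p b) * (rexp (-p b) * f b) := by
        rw [← mul_assoc, ← exp_add, add_neg_cancel, exp_zero, one_mul]
    _ ≤ rexp (p b) * (rexp (-p a) * f a) := by gcongr
    _ = rexp (p b - p a) * f a := by rw [← mul_assoc, ← exp_add, sub_eq_add_neg]

theorem le_exp_mul_of_neg_mul_le_deriv (hab : a ≤ b)
    (hf : ∀ x ∈ Set.Icc a b, HasDerivAt f (f' x) x)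
    (hp : ∀ x ∈ Set.Icc a b, HasDerivAt p (p' x) x)
    (hle : ∀ x ∈ Set.Icc a b, -(p' x * f x) ≤ f' x) : f a ≤ rexp (p b - p a) * f b := by
  have hneg := le_exp_mul_of_deriv_le_mul hab (fun x hx ↦ (hf x hx).neg)
    (fun x hx ↦ (hp x hx).neg) fun x hx ↦ by
      simpa only [Pi.neg_apply, neg_mul_neg] using neg_le.1 (hle x hx)
  simp only [Pi.neg_apply, mul_neg, neg_le_neg_iff] at hneg
  calc f a = rexp (p b - p a) * (rexp (-p b - -p a) * f a) := by
        rw [← mul_assoc, ← exp_add, sub_add_sub_comm, add_neg_cancel, add_neg_cancel, sub_zero,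
          exp_zero, one_mul]
    _ ≤ rexp (p b - p a) * f b := by gcongr

theorem exists_first_zero (hf : ContinuousOn f (Set.Icc a b)) (ha : 0 < f a)
    (hneg : ∃ t ∈ Set.Icc a b, f t ≤ 0) :
    ∃ z ∈ Set.Icc a b, f z = 0 ∧ ∀ t ∈ Set.Icc a z, 0 ≤ f t := by
  have hzero : ∀ t ∈ Set.Icc a b, f t ≤ 0 → ∃ s ∈ Set.Icc a t, f s = 0 := fun t ht hft ↦
    intermediate_value_Icc' ht.1 (hf.mono (Set.Icc_subset_Icc_right ht.2)) ⟨hft, ha.le⟩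
  have hcompact : IsCompact (Set.Icc a b ∩ f ⁻¹' {0}) :=
    isCompact_Icc.of_isClosed_subset
      (hf.preimage_isClosed_of_isClosed isClosed_Icc isClosed_singleton) Set.inter_subset_left
  obtain ⟨t, ht, hft⟩ := hneg
  obtain ⟨s, hs, hfs⟩ := hzero t ht hft
  obtain ⟨z, ⟨hz, hfz⟩, hleast⟩ := hcompact.exists_isLeast ⟨s, ⟨hs.1, hs.2.trans ht.2⟩, hfs⟩
  refine ⟨z, hz, hfz, fun t ht ↦ ?_⟩
  by_contra! hlt
  obtain ⟨s, hs, hfs⟩ := hzero t ⟨ht.1, ht.2.trans hz.2⟩ hlt.le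
  have hzs : z ≤ s := hleast ⟨⟨hs.1, hs.2.trans (ht.2.trans hz.2)⟩, hfs⟩
  have htz : t = z := le_antisymm ht.2 (hzs.trans hs.2)
  rw [htz, show f z = 0 from hfz] at hlt
  exact hlt.false

end Calculus

/-- The linear oscillator `u'' + Q u = 0` on `s`, as the first-order system `u' = v`, `v' = -Q u`;
the derivatives are two-sided, also at the endpoints of `s`. -/
structure IsOscillator (Q u v : ℝ → ℝ) (s : Set ℝ) : Prop where
  hasDerivAt_fst : ∀ t ∈ s, HasDerivAt u (v t) t
  hasDerivAt_snd : ∀ t ∈ s, HasDerivAt v (-(Q t * u t)) t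

/-- The properties of the first critical point `x₁` of a solution with `u 0 = 0`, `u' 0 = 1`
from which the later regions are started. -/
structure IsFirstTurningPoint (u v : ℝ → ℝ) (x₁ : ℝ) : Prop where
  one_le : 1 ≤ x₁
  le_four : x₁ ≤ 4
  deriv_eq_zero : v x₁ = 0
  nonneg : ∀ t ∈ Set.Icc 0 x₁, 0 ≤ u t
  le_two_mul : ∀ t ∈ Set.Icc 0 x₁, u t ≤ 2 * t
  two_thirds_le : 2 / 3 ≤ u x₁

namespace IsOscillator

variable {Q Q' u v p p' : ℝ → ℝ} {s : Set ℝ} {a b x : ℝ}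

theorem mono {r : Set ℝ} (S : IsOscillator Q u v s) (hr : r ⊆ s) : IsOscillator Q u v r :=
  ⟨fun t ht ↦ S.hasDerivAt_fst t (hr ht), fun t ht ↦ S.hasDerivAt_snd t (hr ht)⟩

theorem eq_zero_of_initial_eq_zero (S : IsOscillator Q u v (Set.Icc a b))
    (hQ : ContinuousOn Q (Set.Icc a b)) (hu : u a = 0) (hv : v a = 0) :
    ∀ t ∈ Set.Icc a b, u t = 0 := by
  obtain ⟨K, hK⟩ := isCompact_Icc.exists_bound_of_continuousOn hQ
  have hzero : ∀ t ∈ Set.Icc a b, (u t, v t) = 0 :=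
    eq_zero_of_abs_deriv_le_mul_abs_self_of_eq_zero_right (K := max 1 K)
      (f' := fun t ↦ (v t, -(Q t * u t)))
      (fun t ht ↦ ((S.hasDerivAt_fst t ht).continuousAt.prodMk
        (S.hasDerivAt_snd t ht).continuousAt).continuousWithinAt)
      (fun t ht ↦ ((S.hasDerivAt_fst t (Set.Ico_subset_Icc_self ht)).prodMk
        (S.hasDerivAt_snd t (Set.Ico_subset_Icc_self ht))).hasDerivWithinAt)
      (by rw [hu, hv, Prod.mk_zero_zero])
      (fun t ht ↦ by
        have hQt := hK t (Set.Ico_subset_Icc_self ht)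
        have hfst : ‖u t‖ ≤ ‖(u t, v t)‖ := norm_fst_le (u t, v t)
        have hsnd : ‖v t‖ ≤ ‖(u t, v t)‖ := norm_snd_le (u t, v t)
        refine max_le ?_ ?_
        · exact hsnd.trans (le_mul_of_one_le_left (norm_nonneg _) (le_max_left _ _))
        · rw [norm_neg, norm_mul]
          gcongr
          exact hQt.trans (le_max_right _ _))
  exact fun t ht ↦ congrArg Prod.fst (hzero t ht)

theorem hasDerivAt_energy (S : IsOscillator Q u v s) {q : ℝ} (hx : x ∈ s)
    (hQ : HasDerivAt Q q x) :
    HasDerivAt (fun t ↦ v t ^ 2 + Q t * u t ^ 2) (q * u x ^ 2) x := by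
  refine (((S.hasDerivAt_snd x hx).pow 2).add
    (hQ.mul ((S.hasDerivAt_fst x hx).pow 2))).congr_deriv ?_
  simp only [Pi.pow_apply]
  push_cast
  ring

theorem le_of_forall_deriv_nonneg (S : IsOscillator Q u v (Set.Icc a b))
    (hv : ∀ t ∈ Set.Icc a b, 0 ≤ v t) {r t : ℝ} (har : a ≤ r) (hrt : r ≤ t) (htb : t ≤ b) :
    u r ≤ u t :=
  le_of_hasDerivAt_nonneg hrt
    (fun x hx ↦ S.hasDerivAt_fst x ⟨har.trans hx.1, hx.2.trans htb⟩)
    fun x hx ↦ hv x ⟨har.trans hx.1, hx.2.trans htb⟩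

theorem amplitude_le_exp_mul (S : IsOscillator Q u v (Set.Icc a b)) (hab : a ≤ b)
    (hQ : ∀ x ∈ Set.Icc a b, 0 < Q x) (hQ' : ∀ x ∈ Set.Icc a b, HasDerivAt Q (Q' x) x)
    (hp : ∀ x ∈ Set.Icc a b, HasDerivAt p (p' x) x) (hp' : ∀ x ∈ Set.Icc a b, 0 ≤ p' x)
    (hQp : ∀ x ∈ Set.Icc a b, -(p' x * Q x) ≤ Q' x) :
    u b ^ 2 + v b ^ 2 / Q b ≤ rexp (p b - p a) * (u a ^ 2 + v a ^ 2 / Q a) := by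
  refine le_exp_mul_of_deriv_le_mul (f := fun t ↦ u t ^ 2 + v t ^ 2 / Q t)
    (f' := fun t ↦ -(Q' t * (v t / Q t) ^ 2)) hab (fun x hx ↦ ?_) hp fun x hx ↦ ?_
  · have hQx := (hQ x hx).ne'
    refine (((S.hasDerivAt_fst x hx).pow 2).add
      (((S.hasDerivAt_snd x hx).pow 2).div (hQ' x hx) hQx)).congr_deriv ?_
    simp only [Pi.pow_apply]
    push_cast
    field_simp
    ring
  · have hQx := hQ x hx
    calc -(Q' x * (v x / Q x) ^ 2) ≤ p' x * Q x * (v x / Q x) ^ 2 := by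
          nlinarith [mul_le_mul_of_nonneg_right (hQp x hx) (sq_nonneg (v x / Q x))]
      _ = p' x * (v x ^ 2 / Q x) := by field_simp
      _ ≤ p' x * (u x ^ 2 + v x ^ 2 / Q x) := by
          gcongr
          · exact hp' x hx
          · linarith [sq_nonneg (u x)]

theorem energy_le_exp_mul (S : IsOscillator Q u v (Set.Icc a b)) (hab : a ≤ b)
    (hQ' : ∀ x ∈ Set.Icc a b, HasDerivAt Q (Q' x) x)
    (hp : ∀ x ∈ Set.Icc a b, HasDerivAt p (p' x) x) (hp' : ∀ x ∈ Set.Icc a b, 0 ≤ p' x)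
    (hQp : ∀ x ∈ Set.Icc a b, -(p' x * Q x) ≤ Q' x) :
    v a ^ 2 + Q a * u a ^ 2 ≤ rexp (p b - p a) * (v b ^ 2 + Q b * u b ^ 2) := by
  refine le_exp_mul_of_neg_mul_le_deriv (f := fun t ↦ v t ^ 2 + Q t * u t ^ 2) hab
    (fun x hx ↦ S.hasDerivAt_energy hx (hQ' x hx)) hp fun x hx ↦ ?_
  nlinarith [mul_le_mul_of_nonneg_right (hQp x hx) (sq_nonneg (u x)),
    mul_nonneg (hp' x hx) (sq_nonneg (v x))]

/- If `u' > 0` persisted, then `u 2 ≥ v 2` (`v` decreases on `[1, 2]`), and `v' ≤ -u / 2` would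
cost `v` at least `u 2` on `[2, 4]`. -/
theorem exists_deriv_nonpos (S : IsOscillator Q u v (Set.Icc 0 4))
    (hQ : ∀ t ∈ Set.Icc 1 4, 1 / 2 ≤ Q t) (hu0 : u 0 = 0) : ∃ t ∈ Set.Icc 0 4, v t ≤ 0 := by
  by_contra! hpos
  have hmono : ∀ {r t}, 0 ≤ r → r ≤ t → t ≤ 4 → u r ≤ u t :=
    S.le_of_forall_deriv_nonneg fun t ht ↦ (hpos t ht).le
  have hu : ∀ t ∈ Set.Icc (0 : ℝ) 4, 0 ≤ u t := fun t ht ↦ hu0 ▸ hmono le_rfl ht.1 ht.2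
  have hv_anti : ∀ r ∈ Set.Icc (1 : ℝ) 2, v 2 ≤ v r := fun r hr ↦
    ge_of_hasDerivAt_nonpos hr.2
      (fun x hx ↦ S.hasDerivAt_snd x ⟨by linarith [hr.1, hx.1], by linarith [hx.2]⟩) fun x hx ↦ by
        have hQx := hQ x ⟨hr.1.trans hx.1, by linarith [hx.2]⟩
        have hux := hu x ⟨by linarith [hr.1, hx.1], by linarith [hx.2]⟩
        exact neg_nonpos.2 (mul_nonneg (by linarith) hux)
  have hu2 : v 2 * 2 - v 2 * 1 ≤ u 2 - u 1 :=
    sub_le_sub_of_hasDerivAt_le (f := fun x ↦ v 2 * x) one_le_two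
      (fun x _ ↦ (hasDerivAt_id x).const_mul (v 2))
      (fun x hx ↦ S.hasDerivAt_fst x ⟨by linarith [hx.1], by linarith [hx.2]⟩)
      fun x hx ↦ (mul_one (v 2)).trans_le (hv_anti x hx)
  have hv4 : v 4 - v 2 ≤ -(u 2 / 2) * 4 - -(u 2 / 2) * 2 :=
    sub_le_sub_of_hasDerivAt_le (g := fun x ↦ -(u 2 / 2) * x) (by norm_num)
      (fun x hx ↦ S.hasDerivAt_snd x ⟨by linarith [hx.1], hx.2⟩)
      (fun x _ ↦ (hasDerivAt_id x).const_mul (-(u 2 / 2))) fun x hx ↦ by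
        have hQx := hQ x ⟨by linarith [hx.1], hx.2⟩
        have hux := hmono zero_le_two hx.1 hx.2
        have hu2 := hu 2 (by norm_num)
        nlinarith
  linarith [hpos 4 (by norm_num), hu 1 (by norm_num)]

theorem nonneg_of_deriv_nonneg (S : IsOscillator Q u v (Set.Icc 0 x)) (hu0 : u 0 = 0)
    (hv : ∀ t ∈ Set.Icc 0 x, 0 ≤ v t) {t : ℝ} (ht : t ∈ Set.Icc 0 x) : 0 ≤ u t :=
  hu0 ▸ S.le_of_forall_deriv_nonneg hv le_rfl ht.1 ht.2

theorem le_mul_of_deriv_le (S : IsOscillator Q u v (Set.Icc 0 x)) (hu0 : u 0 = 0) {M : ℝ}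
    (hM : ∀ t ∈ Set.Icc 0 x, v t ≤ M) :
    ∀ t ∈ Set.Icc 0 x, u t ≤ M * t := fun t ht ↦ by
  have hcmp : u t - u 0 ≤ M * t - M * 0 :=
    sub_le_sub_of_hasDerivAt_le (g := fun y ↦ M * y) ht.1
      (fun y hy ↦ S.hasDerivAt_fst y ⟨hy.1, hy.2.trans ht.2⟩)
      (fun y _ ↦ (hasDerivAt_id y).const_mul M)
      fun y hy ↦ (hM y ⟨hy.1, hy.2.trans ht.2⟩).trans_eq (mul_one M).symm
  linarith

theorem deriv_le_two (S : IsOscillator Q u v (Set.Icc 0 x)) (hu0 : u 0 = 0)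
    (hv : ∀ t ∈ Set.Icc 0 x, 0 ≤ v t) (hv0 : v 0 = 1) (hx0 : 0 ≤ x) (hx4 : x ≤ 4)
    (hQ : ∀ t ∈ Set.Icc 0 x, -(1 / 64) ≤ Q t) : ∀ t ∈ Set.Icc 0 x, v t ≤ 2 := by
  obtain ⟨tₘ, htₘ, hmax⟩ := isCompact_Icc.exists_isMaxOn (Set.nonempty_Icc.2 hx0)
    fun t ht ↦ (S.hasDerivAt_snd t ht).continuousAt.continuousWithinAt
  have hM0 : 0 ≤ v tₘ := hv tₘ htₘ
  have hcmp : v tₘ - v 0 ≤ v tₘ / 16 * tₘ - v tₘ / 16 * 0 :=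
    sub_le_sub_of_hasDerivAt_le (g := fun y ↦ v tₘ / 16 * y) htₘ.1
      (fun y hy ↦ S.hasDerivAt_snd y ⟨hy.1, hy.2.trans htₘ.2⟩)
      (fun y _ ↦ (hasDerivAt_id y).const_mul (v tₘ / 16)) fun y hy ↦ by
        have hyx : y ∈ Set.Icc 0 x := ⟨hy.1, hy.2.trans htₘ.2⟩
        have huy := S.nonneg_of_deriv_nonneg hu0 hv hyx
        have huy' : u y ≤ v tₘ * y := S.le_mul_of_deriv_le hu0 (fun t ht ↦ hmax ht) y hyx
        nlinarith [mul_le_mul_of_nonneg_right (hQ y hyx) huy,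
          mul_le_mul_of_nonneg_left (hyx.2.trans hx4) hM0]
  have hM2 : v tₘ ≤ 2 := by
    nlinarith [mul_le_mul_of_nonneg_left (htₘ.2.trans hx4) hM0]
  exact fun t ht ↦ (hmax ht).trans hM2

theorem one_sub_sq_le_deriv (S : IsOscillator Q u v (Set.Icc 0 x)) (hu0 : u 0 = 0)
    (hv : ∀ t ∈ Set.Icc 0 x, 0 ≤ v t) (hv0 : v 0 = 1) (hu2 : ∀ t ∈ Set.Icc 0 x, u t ≤ 2 * t)
    (hQ : ∀ t ∈ Set.Icc 0 1, Q t ≤ 1) {t : ℝ} (ht : t ∈ Set.Icc 0 x) (ht1 : t ≤ 1) :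
    1 - t ^ 2 ≤ v t := by
  have hcmp : -t ^ 2 - -(0 : ℝ) ^ 2 ≤ v t - v 0 :=
    sub_le_sub_of_hasDerivAt_le (f := fun y ↦ -y ^ 2) (f' := fun y ↦ -(2 * y)) ht.1
      (fun y _ ↦ (hasDerivAt_pow 2 y).fun_neg.congr_deriv (by simp))
      (fun y hy ↦ S.hasDerivAt_snd y ⟨hy.1, hy.2.trans ht.2⟩) fun y hy ↦ by
        have hyx : y ∈ Set.Icc 0 x := ⟨hy.1, hy.2.trans ht.2⟩
        nlinarith [mul_le_mul_of_nonneg_right (hQ y ⟨hy.1, hy.2.trans ht1⟩)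
          (S.nonneg_of_deriv_nonneg hu0 hv hyx), hu2 y hyx]
  linarith

theorem exists_isFirstTurningPoint (S : IsOscillator Q u v (Set.Icc 0 4)) (hu0 : u 0 = 0)
    (hv0 : v 0 = 1) (hQ : ∀ t ∈ Set.Icc 0 4, -(1 / 64) ≤ Q t) (hQ1 : ∀ t ∈ Set.Icc 0 1, Q t ≤ 1)
    (hQ4 : ∀ t ∈ Set.Icc 1 4, 1 / 2 ≤ Q t) : ∃ x₁, IsFirstTurningPoint u v x₁ := by
  obtain ⟨x₁, ⟨h0, h4⟩, hvx, hv⟩ := exists_first_zero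
    (fun t ht ↦ (S.hasDerivAt_snd t ht).continuousAt.continuousWithinAt) (by rw [hv0]; norm_num)
    (S.exists_deriv_nonpos hQ4 hu0)
  have hsub : Set.Icc 0 x₁ ⊆ Set.Icc 0 4 := Set.Icc_subset_Icc_right h4
  have S₁ := S.mono hsub
  have hu2 := S₁.le_mul_of_deriv_le hu0
    (S₁.deriv_le_two hu0 hv hv0 h0 h4 fun t ht ↦ hQ t (hsub ht))
  have hv_lower : ∀ {t}, t ∈ Set.Icc 0 x₁ → t ≤ 1 → 1 - t ^ 2 ≤ v t :=
    S₁.one_sub_sq_le_deriv hu0 hv hv0 hu2 hQ1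
  have h1 : 1 ≤ x₁ := by
    by_contra! hlt
    nlinarith [hv_lower (Set.right_mem_Icc.2 h0) hlt.le]
  have hu1 : ((1 : ℝ) - 1 ^ 3 / 3) - (0 - 0 ^ 3 / 3) ≤ u 1 - u 0 :=
    sub_le_sub_of_hasDerivAt_le (f := fun y ↦ y - y ^ 3 / 3) (f' := fun y ↦ 1 - y ^ 2)
      zero_le_one (fun y _ ↦ ((hasDerivAt_id y).sub ((hasDerivAt_pow 3 y).div_const 3)).congr_deriv
        (by push_cast; ring))
      (fun y hy ↦ S₁.hasDerivAt_fst y ⟨hy.1, hy.2.trans h1⟩)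
      fun y hy ↦ hv_lower ⟨hy.1, hy.2.trans h1⟩ hy.2
  have hu1x := S₁.le_of_forall_deriv_nonneg hv zero_le_one h1 le_rfl
  have hux : 2 / 3 ≤ u x₁ := by linarith
  exact ⟨x₁, h1, h4, hvx, fun t ↦ S₁.nonneg_of_deriv_nonneg hu0 hv, hu2, hux⟩

end IsOscillator

/-! ### The WKB energy -/

/-- The WKB energy `h v² + u² / h` of a solution of `u'' + (h⁻² - μ) u = 0`: in the phase variable
`∫ h⁻¹` the rescaled solution `u / √h` is nearly a harmonic oscillator, with this energy. -/
noncomputable def wkbEnergy (h u v : ℝ → ℝ) (t : ℝ) : ℝ := h t * v t ^ 2 + u t ^ 2 / h t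

/-- The WKB energy with its first-order correction, chosen so that its derivative involves only
`h''` and `μ h'`. -/
noncomputable def correctedEnergy (μ : ℝ) (h h' u v : ℝ → ℝ) (t : ℝ) : ℝ :=
  wkbEnergy h u v t - h' t * (u t * v t) - μ * (h t * u t ^ 2)

/-- Quantitative validity of the WKB approximation on `s` for `u'' + (h⁻² - μ) u = 0`; the
functions `h'` and `h''` are the first two derivatives of `h`. -/
structure IsSlowAmplitude (μ : ℝ) (h h' h'' : ℝ → ℝ) (s : Set ℝ) : Prop where
  pos : ∀ t ∈ s, 0 < h t
  hasDerivAt : ∀ t ∈ s, HasDerivAt h (h' t) t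
  hasDerivAt_deriv : ∀ t ∈ s, HasDerivAt h' (h'' t) t
  abs_deriv_le : ∀ t ∈ s, |h' t| ≤ 1 / 2
  mul_sq_le : ∀ t ∈ s, μ * h t ^ 2 ≤ 1 / 4
  mul_abs_deriv_mul_le : ∀ t ∈ s, 8 * μ * |h' t| * h t ≤ h'' t

section WKB

variable {μ a b t : ℝ} {h h' h'' Q u v : ℝ → ℝ} {s : Set ℝ}

theorem wkbEnergy_nonneg (ht : 0 < h t) : 0 ≤ wkbEnergy h u v t := by
  unfold wkbEnergy
  positivity

theorem two_mul_abs_mul_le_wkbEnergy (ht : 0 < h t) : 2 * |u t * v t| ≤ wkbEnergy h u v t := by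
  have hsq : 0 ≤ (h t * |v t| - |u t|) ^ 2 / h t := by positivity
  have hexpand : (h t * |v t| - |u t|) ^ 2 / h t = wkbEnergy h u v t - 2 * |u t * v t| := by
    rw [wkbEnergy, abs_mul, ← sq_abs (v t), ← sq_abs (u t)]
    field_simp
    ring
  linarith

theorem sq_le_mul_wkbEnergy (ht : 0 < h t) : u t ^ 2 ≤ h t * wkbEnergy h u v t := by
  have hexpand : h t * wkbEnergy h u v t = (h t * v t) ^ 2 + u t ^ 2 := by
    unfold wkbEnergy
    field_simp
  linarith [sq_nonneg (h t * v t)]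

theorem mul_deriv_sq_le_wkbEnergy (ht : 0 < h t) : h t * v t ^ 2 ≤ wkbEnergy h u v t :=
  le_add_of_nonneg_right (by positivity)

namespace IsSlowAmplitude

theorem mono {r : Set ℝ} (A : IsSlowAmplitude μ h h' h'' s) (hr : r ⊆ s) :
    IsSlowAmplitude μ h h' h'' r where
  pos t ht := A.pos t (hr ht)
  hasDerivAt t ht := A.hasDerivAt t (hr ht)
  hasDerivAt_deriv t ht := A.hasDerivAt_deriv t (hr ht)
  abs_deriv_le t ht := A.abs_deriv_le t (hr ht)
  mul_sq_le t ht := A.mul_sq_le t (hr ht)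
  mul_abs_deriv_mul_le t ht := A.mul_abs_deriv_mul_le t (hr ht)

theorem hasDerivAt_correctedEnergy (A : IsSlowAmplitude μ h h' h'' s)
    (S : IsOscillator (fun t ↦ 1 / h t ^ 2 - μ) u v s) (ht : t ∈ s) :
    HasDerivAt (correctedEnergy μ h h' u v)
      (-(h'' t * (u t * v t)) - 2 * μ * h' t * u t ^ 2) t := by
  have hpos := (A.pos t ht).ne'
  have dh := A.hasDerivAt t ht
  have du := S.hasDerivAt_fst t ht
  have dv := S.hasDerivAt_snd t ht
  refine ((((dh.mul (dv.pow 2)).add ((du.pow 2).div dh hpos)).sub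
    ((A.hasDerivAt_deriv t ht).mul (du.mul dv))).sub
    ((dh.mul (du.pow 2)).const_mul μ)).congr_deriv ?_
  simp only [Pi.pow_apply, Pi.mul_apply]
  push_cast
  field_simp
  ring

theorem abs_correctedEnergy_sub_le (hμ : 0 ≤ μ) (A : IsSlowAmplitude μ h h' h'' s) (ht : t ∈ s) :
    |correctedEnergy μ h h' u v t - wkbEnergy h u v t| ≤ wkbEnergy h u v t / 2 := by
  have hpos := A.pos t ht
  have hE := wkbEnergy_nonneg (u := u) (v := v) hpos
  have hcross : |h' t * (u t * v t)| ≤ 1 / 2 * (wkbEnergy h u v t / 2) := by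
    rw [abs_mul]
    gcongr
    · exact A.abs_deriv_le t ht
    · linarith [two_mul_abs_mul_le_wkbEnergy (u := u) (v := v) hpos]
  have hμu : μ * (h t * u t ^ 2) ≤ 1 / 4 * wkbEnergy h u v t := calc
    μ * (h t * u t ^ 2) ≤ μ * (h t * (h t * wkbEnergy h u v t)) := by
        gcongr
        exact sq_le_mul_wkbEnergy hpos
    _ = μ * h t ^ 2 * wkbEnergy h u v t := by ring
    _ ≤ 1 / 4 * wkbEnergy h u v t := by
        gcongr
        exact A.mul_sq_le t ht
  have hμu0 : 0 ≤ μ * (h t * u t ^ 2) := by positivity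
  have hcross' := abs_le.1 hcross
  rw [correctedEnergy, abs_le]
  constructor <;> linarith

theorem abs_deriv_correctedEnergy_le (hμ : 0 ≤ μ) (A : IsSlowAmplitude μ h h' h'' s)
    (ht : t ∈ s) :
    |-(h'' t * (u t * v t)) - 2 * μ * h' t * u t ^ 2|
      ≤ 2 * h'' t * correctedEnergy μ h h' u v t := by
  have hpos := A.pos t ht
  have hcond := A.mul_abs_deriv_mul_le t ht
  have hh'' : 0 ≤ h'' t := le_trans (by positivity) hcond
  have hE := wkbEnergy_nonneg (u := u) (v := v) hpos
  have hcross : |h'' t * (u t * v t)| ≤ h'' t * (wkbEnergy h u v t / 2) := by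
    rw [abs_mul, abs_of_nonneg hh'']
    gcongr
    linarith [two_mul_abs_mul_le_wkbEnergy (u := u) (v := v) hpos]
  have hμu : |2 * μ * h' t * u t ^ 2| ≤ h'' t * wkbEnergy h u v t / 4 := calc
    |2 * μ * h' t * u t ^ 2| = 2 * μ * |h' t| * u t ^ 2 := by
        rw [abs_mul, abs_mul, abs_of_nonneg (sq_nonneg (u t)), abs_of_nonneg (by positivity)]
    _ ≤ 2 * μ * |h' t| * (h t * wkbEnergy h u v t) := by
        gcongr
        exact sq_le_mul_wkbEnergy hpos
    _ = 8 * μ * |h' t| * h t * wkbEnergy h u v t / 4 := by ring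
    _ ≤ h'' t * wkbEnergy h u v t / 4 := by gcongr
  have hG := (abs_le.1 (A.abs_correctedEnergy_sub_le (u := u) (v := v) hμ ht)).1
  have hlower : h'' t * (wkbEnergy h u v t / 2) ≤ h'' t * correctedEnergy μ h h' u v t := by
    gcongr
    linarith
  have hcross' := abs_le.1 hcross
  have hμu' := abs_le.1 hμu
  have := mul_nonneg hh'' hE
  rw [abs_le]
  constructor <;> linarith

/- Grönwall with weight `2 h'`, whose total variation on `[a, b]` is at most `2`. -/
theorem wkbEnergy_comparable (hμ : 0 ≤ μ) (A : IsSlowAmplitude μ h h' h'' (Set.Icc a b))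
    (S : IsOscillator (fun t ↦ 1 / h t ^ 2 - μ) u v (Set.Icc a b)) (hab : a ≤ b) :
    wkbEnergy h u v b ≤ 3 * rexp 2 * wkbEnergy h u v a ∧
      wkbEnergy h u v a ≤ 3 * rexp 2 * wkbEnergy h u v b := by
  have ha := Set.left_mem_Icc.2 hab
  have hb := Set.right_mem_Icc.2 hab
  have hweight : rexp (2 * h' b - 2 * h' a) ≤ rexp 2 := exp_le_exp.2 (by
    linarith [(abs_le.1 (A.abs_deriv_le a ha)).1, (abs_le.1 (A.abs_deriv_le b hb)).2])
  have hG := fun x hx ↦ A.hasDerivAt_correctedEnergy S (t := x) hx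
  have hp := fun x hx ↦ (A.hasDerivAt_deriv x hx).const_mul 2
  have hG' := fun x hx ↦
    abs_le.1 (A.abs_deriv_correctedEnergy_le (u := u) (v := v) hμ (t := x) hx)
  have hup := le_exp_mul_of_deriv_le_mul hab hG hp fun x hx ↦ (hG' x hx).2
  have hlow := le_exp_mul_of_neg_mul_le_deriv hab hG hp fun x hx ↦ (hG' x hx).1
  have hGa := abs_le.1 (A.abs_correctedEnergy_sub_le (u := u) (v := v) hμ ha)
  have hGb := abs_le.1 (A.abs_correctedEnergy_sub_le (u := u) (v := v) hμ hb)
  have := wkbEnergy_nonneg (u := u) (v := v) (A.pos a ha)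
  have := wkbEnergy_nonneg (u := u) (v := v) (A.pos b hb)
  have hup' := hup.trans (mul_le_mul_of_nonneg_right hweight (by linarith))
  have hlow' := hlow.trans (mul_le_mul_of_nonneg_right hweight (by linarith))
  have he := exp_pos 2
  constructor
  · nlinarith [mul_le_mul_of_nonneg_left hGa.2 he.le]
  · nlinarith [mul_le_mul_of_nonneg_left hGb.2 he.le]

end IsSlowAmplitude

end WKB

/-! ### The rescaled weight and its WKB amplitude -/

/-- The weight `w(t) = t^χ e^{-ε t²}` of the rescaled problem `u'' + (w - κ ε) u = 0`. -/
noncomputable def scaledWeight (χ ε t : ℝ) : ℝ := t ^ χ * rexp (-(ε * t ^ 2))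

/-- The WKB amplitude `h = w^{-1/2}` of the weight `w = scaledWeight χ ε`. -/
noncomputable def wkbAmplitude (χ ε t : ℝ) : ℝ := t ^ (-(χ / 2)) * rexp (ε * t ^ 2 / 2)

/-- The logarithmic derivative `h' / h` of the WKB amplitude. -/
noncomputable def wkbLogDeriv (χ ε t : ℝ) : ℝ := ε * t - χ / (2 * t)

/-- The first derivative `h'` of the WKB amplitude. -/
noncomputable def wkbAmplitudeDeriv (χ ε t : ℝ) : ℝ := wkbLogDeriv χ ε t * wkbAmplitude χ ε t

/-- The second derivative `h''` of the WKB amplitude. -/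
noncomputable def wkbAmplitudeDeriv2 (χ ε t : ℝ) : ℝ :=
  (wkbLogDeriv χ ε t ^ 2 + ε + χ / (2 * t ^ 2)) * wkbAmplitude χ ε t

section Weight

variable {χ ε t : ℝ}

theorem scaledWeight_nonneg (ht : 0 ≤ t) : 0 ≤ scaledWeight χ ε t := by
  unfold scaledWeight
  positivity

theorem one_sub_le_scaledWeight (hχ : 0 ≤ χ) (ht : 1 ≤ t) : 1 - ε * t ^ 2 ≤ scaledWeight χ ε t :=
  calc 1 - ε * t ^ 2 ≤ rexp (-(ε * t ^ 2)) := by linarith [add_one_le_exp (-(ε * t ^ 2))]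
    _ ≤ scaledWeight χ ε t := le_mul_of_one_le_left (exp_pos _).le (one_le_rpow ht hχ)

theorem scaledWeight_le_rpow (hε : 0 ≤ ε) (ht : 0 ≤ t) : scaledWeight χ ε t ≤ t ^ χ :=
  mul_le_of_le_one_right (rpow_nonneg ht χ) (exp_le_one_iff.2 (neg_nonpos.2 (by positivity)))

theorem hasDerivAt_scaledWeight (ht : 0 < t) :
    HasDerivAt (scaledWeight χ ε) ((χ / t - 2 * ε * t) * scaledWeight χ ε t) t := by
  refine ((hasDerivAt_rpow_const (p := χ) (Or.inl ht.ne')).mul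
    ((hasDerivAt_pow 2 t).const_mul ε).fun_neg.exp).congr_deriv ?_
  rw [rpow_sub_one ht.ne', scaledWeight]
  push_cast
  field_simp
  ring

theorem wkbAmplitude_pos (ht : 0 < t) : 0 < wkbAmplitude χ ε t := by
  unfold wkbAmplitude
  positivity

theorem scaledWeight_eq_one_div_sq (ht : 0 < t) :
    scaledWeight χ ε t = 1 / wkbAmplitude χ ε t ^ 2 := by
  rw [eq_div_iff (pow_pos (wkbAmplitude_pos ht) 2).ne', scaledWeight, wkbAmplitude, mul_pow,
    mul_mul_mul_comm, ← rpow_mul_natCast ht.le, ← rpow_add ht, ← exp_nat_mul, ← exp_add]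
  push_cast
  ring_nf
  simp

theorem hasDerivAt_wkbAmplitude (ht : 0 < t) :
    HasDerivAt (wkbAmplitude χ ε) (wkbAmplitudeDeriv χ ε t) t := by
  refine ((hasDerivAt_rpow_const (p := -(χ / 2)) (Or.inl ht.ne')).mul
    (((hasDerivAt_pow 2 t).const_mul ε).div_const 2).exp).congr_deriv ?_
  rw [rpow_sub_one ht.ne', wkbAmplitudeDeriv, wkbLogDeriv, wkbAmplitude]
  push_cast
  field_simp
  ring

theorem hasDerivAt_wkbLogDeriv (ht : 0 < t) :
    HasDerivAt (wkbLogDeriv χ ε) (ε + χ / (2 * t ^ 2)) t := by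
  refine (((hasDerivAt_id t).const_mul ε).sub ((hasDerivAt_const t χ).div
    ((hasDerivAt_id t).const_mul 2) (mul_ne_zero two_ne_zero ht.ne'))).congr_deriv ?_
  simp only [id]
  field_simp
  ring

theorem hasDerivAt_wkbAmplitudeDeriv (ht : 0 < t) :
    HasDerivAt (wkbAmplitudeDeriv χ ε) (wkbAmplitudeDeriv2 χ ε t) t := by
  refine ((hasDerivAt_wkbLogDeriv ht).mul (hasDerivAt_wkbAmplitude ht)).congr_deriv ?_
  rw [wkbAmplitudeDeriv2, wkbAmplitudeDeriv]
  ring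

variable {a T : ℝ}

theorem wkbLogDeriv_mono (hχ : 0 ≤ χ) (hε : 0 ≤ ε) (ha : 0 < a) (hat : a ≤ t) :
    wkbLogDeriv χ ε a ≤ wkbLogDeriv χ ε t := by
  unfold wkbLogDeriv
  gcongr

theorem wkbAmplitudeDeriv_mono (hχ : 0 ≤ χ) (hε : 0 ≤ ε) (ha : 0 < a) (hat : a ≤ t) :
    wkbAmplitudeDeriv χ ε a ≤ wkbAmplitudeDeriv χ ε t :=
  le_of_hasDerivAt_nonneg hat (fun x hx ↦ hasDerivAt_wkbAmplitudeDeriv (ha.trans_le hx.1))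
    fun x hx ↦ mul_nonneg (by positivity) (wkbAmplitude_pos (ha.trans_le hx.1)).le

theorem wkbAmplitude_le_max (hχ : 0 ≤ χ) (hε : 0 ≤ ε) (ha : 0 < a) (ht : t ∈ Set.Icc a T) :
    wkbAmplitude χ ε t ≤ max (wkbAmplitude χ ε a) (wkbAmplitude χ ε T) := by
  have ht0 : 0 < t := ha.trans_le ht.1
  rcases le_total (wkbLogDeriv χ ε t) 0 with hneg | hpos
  · refine le_max_of_le_left (ge_of_hasDerivAt_nonpos ht.1
      (fun x hx ↦ hasDerivAt_wkbAmplitude (ha.trans_le hx.1)) fun x hx ↦ ?_)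
    have hx0 := ha.trans_le hx.1
    exact mul_nonpos_of_nonpos_of_nonneg ((wkbLogDeriv_mono hχ hε hx0 hx.2).trans hneg)
      (wkbAmplitude_pos hx0).le
  · refine le_max_of_le_right (le_of_hasDerivAt_nonneg ht.2
      (fun x hx ↦ hasDerivAt_wkbAmplitude (ht0.trans_le hx.1)) fun x hx ↦ ?_)
    exact mul_nonneg (hpos.trans (wkbLogDeriv_mono hχ hε ht0 hx.1))
      (wkbAmplitude_pos (ht0.trans_le hx.1)).le

theorem two_mul_sqrt_mul_abs_wkbAmplitudeDeriv_le (hχ : 0 ≤ χ) (hε : 0 ≤ ε) (ht : 0 < t) :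
    2 * √ε * |wkbAmplitudeDeriv χ ε t| ≤ wkbAmplitudeDeriv2 χ ε t := by
  have hh := wkbAmplitude_pos (χ := χ) (ε := ε) ht
  have hχt : 0 ≤ χ / (2 * t ^ 2) := by positivity
  rw [wkbAmplitudeDeriv, wkbAmplitudeDeriv2, abs_mul, abs_of_pos hh, ← mul_assoc]
  gcongr
  nlinarith [two_mul_le_add_sq (√ε) |wkbLogDeriv χ ε t|, sq_sqrt hε, sq_abs (wkbLogDeriv χ ε t)]

end Weight

theorem rpow_neg_half_sq {ε : ℝ} (hε : 0 < ε) : (ε ^ (-(1 / 2) : ℝ)) ^ 2 = ε⁻¹ := by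
  rw [← rpow_mul_natCast hε.le, ← rpow_neg_one]
  norm_num

theorem eventually_const_mul_rpow_le_one (D : ℝ) {r : ℝ} (hr : 0 < r) :
    ∀ᶠ ε : ℝ in 𝓝[>] 0, D * ε ^ r ≤ 1 := by
  have hlim : Filter.Tendsto (fun ε : ℝ ↦ D * ε ^ r) (𝓝[>] 0) (𝓝 0) := by
    have hcont := (continuousAt_rpow_const 0 r (Or.inr hr.le)).const_mul D
    rw [ContinuousAt, zero_rpow hr.ne', mul_zero] at hcont
    exact hcont.mono_left nhdsWithin_le_nhds
  exact hlim.eventually_le_const one_pos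

/-- The point from which the WKB comparison is started; large enough to make `|h'| ≤ 1/2` there. -/
def wkbStart (χ : ℝ) : ℝ := 2 * χ + 4

/-- Admissible parameters: `ε` is small enough, depending on `χ` and `κ`, for the estimates of
all regions to apply. -/
structure IsAsymptoticRegime (χ κ ε : ℝ) : Prop where
  weight_nonneg : 0 ≤ χ
  kappa_nonneg : 0 ≤ κ
  pos : 0 < ε
  small : 64 * (κ + 1) * ε ^ (1 / 30 : ℝ) ≤ 1
  start_sq_mul_le : wkbStart χ ^ 2 * ε ≤ 1

theorem eventually_isAsymptoticRegime {χ κ : ℝ} (hχ : 0 ≤ χ) (hκ : 0 ≤ κ) :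
    ∀ᶠ ε : ℝ in 𝓝[>] 0, IsAsymptoticRegime χ κ ε := by
  filter_upwards [eventually_const_mul_rpow_le_one (64 * (κ + 1)) (r := 1 / 30) (by norm_num),
    eventually_const_mul_rpow_le_one (wkbStart χ ^ 2) one_pos, self_mem_nhdsWithin]
    with ε hsmall hstart hε
  exact ⟨hχ, hκ, hε, hsmall, by rwa [rpow_one] at hstart⟩

namespace IsAsymptoticRegime

variable {χ κ ε r t : ℝ}

theorem four_le_start (R : IsAsymptoticRegime χ κ ε) : 4 ≤ wkbStart χ := by
  linarith [R.weight_nonneg, show wkbStart χ = 2 * χ + 4 from rfl]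

theorem le_one (R : IsAsymptoticRegime χ κ ε) : ε ≤ 1 := by
  nlinarith [R.start_sq_mul_le, R.four_le_start, R.pos]

theorem mul_rpow_le (R : IsAsymptoticRegime χ κ ε) (hr : 1 / 30 ≤ r) :
    (κ + 1) * ε ^ r ≤ 1 / 64 := by
  have hκ := R.kappa_nonneg
  calc (κ + 1) * ε ^ r ≤ (κ + 1) * ε ^ (1 / 30 : ℝ) := by
        gcongr (κ + 1) * ?_
        exact rpow_le_rpow_of_exponent_ge R.pos R.le_one hr
    _ ≤ 1 / 64 := by linarith [R.small]

theorem kappa_mul_rpow_le (R : IsAsymptoticRegime χ κ ε) (hr : 1 / 30 ≤ r) :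
    κ * ε ^ r ≤ 1 / 64 := by
  linarith [R.mul_rpow_le hr, rpow_pos_of_pos R.pos r]

theorem rpow_le (R : IsAsymptoticRegime χ κ ε) (hr : 1 / 30 ≤ r) : ε ^ r ≤ 1 / 64 := by
  linarith [R.mul_rpow_le hr, mul_nonneg R.kappa_nonneg (rpow_pos_of_pos R.pos r).le]

theorem kappa_mul_le (R : IsAsymptoticRegime χ κ ε) : κ * ε ≤ 1 / 64 := by
  simpa only [rpow_one] using R.kappa_mul_rpow_le (r := 1) (by norm_num)

theorem le_one_div (R : IsAsymptoticRegime χ κ ε) : ε ≤ 1 / 64 := by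
  simpa only [rpow_one] using R.rpow_le (r := 1) (by norm_num)

theorem kappa_mul_nonneg (R : IsAsymptoticRegime χ κ ε) : 0 ≤ κ * ε :=
  mul_nonneg R.kappa_nonneg R.pos.le

theorem start_le (R : IsAsymptoticRegime χ κ ε) : wkbStart χ ≤ ε ^ (-(1 / 2) : ℝ) := by
  refine (pow_le_pow_iff_left₀ (by linarith [R.four_le_start])
    (rpow_pos_of_pos R.pos _).le two_ne_zero).1 ?_
  rw [rpow_neg_half_sq R.pos, ← one_div, le_div_iff₀ R.pos]
  exact R.start_sq_mul_le

theorem mul_sq_le_one (R : IsAsymptoticRegime χ κ ε) (ht0 : 0 ≤ t)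
    (ht : t ≤ ε ^ (-(1 / 2) : ℝ)) : ε * t ^ 2 ≤ 1 := by
  have hε := R.pos
  calc ε * t ^ 2 ≤ ε * (ε ^ (-(1 / 2) : ℝ)) ^ 2 := by gcongr
    _ = 1 := by rw [rpow_neg_half_sq hε, mul_inv_cancel₀ hε.ne']

theorem wkbAmplitude_start_le_two (R : IsAsymptoticRegime χ κ ε) :
    wkbAmplitude χ ε (wkbStart χ) ≤ 2 := by
  have ha := R.four_le_start
  have hpow : wkbStart χ ^ (-(χ / 2)) ≤ 1 :=
    rpow_le_one_of_one_le_of_nonpos (by linarith) (by linarith [R.weight_nonneg])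
  have hexp : rexp (ε * wkbStart χ ^ 2 / 2) ≤ 2 := calc
    rexp (ε * wkbStart χ ^ 2 / 2) ≤ rexp (log 2) :=
        exp_le_exp.2 (by linarith [R.start_sq_mul_le, log_two_gt_d9])
    _ = 2 := exp_log two_pos
  calc wkbAmplitude χ ε (wkbStart χ) ≤ 1 * 2 := by
        unfold wkbAmplitude
        gcongr
    _ = 2 := one_mul 2

theorem one_le_mul_wkbAmplitude_start (R : IsAsymptoticRegime χ κ ε) :
    1 ≤ wkbStart χ ^ (χ / 2) * wkbAmplitude χ ε (wkbStart χ) := by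
  have ha : 0 < wkbStart χ := by linarith [R.four_le_start]
  have hε := R.pos
  rw [wkbAmplitude, ← mul_assoc, ← rpow_add ha, add_neg_cancel, rpow_zero, one_mul]
  exact one_le_exp (by positivity)

theorem scaledWeight_ge_quarter (R : IsAsymptoticRegime χ κ ε) (ht : 1 ≤ t)
    (htb : t ≤ ε ^ (-(1 / 2) : ℝ)) : 1 / 4 ≤ scaledWeight χ ε t := by
  have hexp : 1 / 4 ≤ rexp (-(ε * t ^ 2)) := calc
    1 / 4 ≤ rexp (-1) := by linarith [exp_neg_one_gt_d9]
    _ ≤ rexp (-(ε * t ^ 2)) :=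
        exp_le_exp.2 (neg_le_neg (R.mul_sq_le_one (by linarith) htb))
  exact hexp.trans (le_mul_of_one_le_left (exp_pos _).le (one_le_rpow ht R.weight_nonneg))

theorem three_quarters_le_scaledWeight (R : IsAsymptoticRegime χ κ ε) (ht : t ∈ Set.Icc 1 4) :
    3 / 4 ≤ scaledWeight χ ε t := by
  have hsq : t ^ 2 ≤ 4 ^ 2 := pow_le_pow_left₀ (by linarith [ht.1]) ht.2 2
  have hεt : ε * t ^ 2 ≤ 1 / 64 * 4 ^ 2 :=
    mul_le_mul R.le_one_div hsq (sq_nonneg t) (by norm_num)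
  linarith [one_sub_le_scaledWeight (ε := ε) R.weight_nonneg ht.1]

end IsAsymptoticRegime

/-- A right end `T` of the WKB region: far enough beyond `ε^{-1/2}` for the weight to be
negligible from `T` on, but early enough for the WKB amplitude to stay below `ε^{-5/12}`. -/
structure IsWKBCutoff (χ ε T : ℝ) : Prop where
  two_mul_le : 2 * ε ^ (-(1 / 2) : ℝ) ≤ T
  le_rpow : T ≤ ε ^ (-(11 / 20) : ℝ)
  rpow_le_amplitude : ε ^ (-(2 / 5) : ℝ) ≤ wkbAmplitude χ ε T
  amplitude_le_rpow : wkbAmplitude χ ε T ≤ ε ^ (-(5 / 12) : ℝ)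
  weight_le_mul_sq : χ ≤ ε * T ^ 2

section Cutoff

variable {χ ε τ : ℝ}

theorem eventually_mul_log_inv_le_rpow_neg {β η : ℝ} (hβ : 0 < β) (hη : 0 < η) :
    ∀ᶠ ε : ℝ in 𝓝[>] 0, β * log ε⁻¹ ≤ ε ^ (-η) := by
  have hlog := (isLittleO_log_rpow_atTop hη).bound (inv_pos.2 hβ)
  filter_upwards [tendsto_inv_nhdsGT_zero.eventually hlog, self_mem_nhdsWithin] with ε hle hε
  have hε0 : (0 : ℝ) < ε := hε
  rw [inv_rpow hε0.le, ← rpow_neg hε0.le, norm_of_nonneg (rpow_pos_of_pos hε0 _).le] at hle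
  calc β * log ε⁻¹ ≤ β * (β⁻¹ * ε ^ (-η)) := by
        gcongr
        exact (le_abs_self _).trans hle
    _ = ε ^ (-η) := mul_inv_cancel_left₀ hβ.ne' _

theorem wkbAmplitude_mul_rpow_neg_half (hε : 0 < ε) (hτ : 0 ≤ τ)
    (hτ2 : τ ^ 2 = (χ / 2 + 5 / 6) * log ε⁻¹) :
    wkbAmplitude χ ε (τ * ε ^ (-(1 / 2) : ℝ)) = τ ^ (-(χ / 2)) * ε ^ (-(5 / 12) : ℝ) := by
  have hexp : rexp (ε * (τ * ε ^ (-(1 / 2) : ℝ)) ^ 2 / 2) = ε ^ (-(χ / 4 + 5 / 12)) := by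
    rw [mul_pow, rpow_neg_half_sq hε, hτ2, log_inv, rpow_def_of_pos hε]
    congr 1
    field_simp
    ring
  rw [wkbAmplitude, hexp, mul_rpow hτ (rpow_pos_of_pos hε _).le, ← rpow_mul hε.le, mul_assoc,
    ← rpow_add hε]
  ring_nf

theorem isWKBCutoff_mul_rpow_neg_half (hχ : 0 ≤ χ) (hε : 0 < ε) (hε1 : ε ≤ 1) (hτ : 2 ≤ τ)
    (hχτ : χ ≤ τ ^ 2) (hτ2 : τ ^ 2 = (χ / 2 + 5 / 6) * log ε⁻¹)
    (hτε : τ ≤ ε ^ (-(1 / (30 * (χ + 1))))) : IsWKBCutoff χ ε (τ * ε ^ (-(1 / 2) : ℝ)) := by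
  have hτ0 : 0 ≤ τ := by linarith
  have hamp := wkbAmplitude_mul_rpow_neg_half hε hτ0 hτ2
  refine ⟨by gcongr, ?_, ?_, ?_, ?_⟩
  · calc τ * ε ^ (-(1 / 2) : ℝ) ≤ ε ^ (-(1 / (30 * (χ + 1)))) * ε ^ (-(1 / 2) : ℝ) := by gcongr
      _ = ε ^ (-(1 / (30 * (χ + 1))) + -(1 / 2)) := (rpow_add hε _ _).symm
      _ ≤ ε ^ (-(11 / 20) : ℝ) := by
        have hη : 1 / (30 * (χ + 1)) ≤ 1 / 20 :=
          one_div_le_one_div_of_le (by norm_num) (by linarith)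
        exact rpow_le_rpow_of_exponent_ge hε hε1 (by linarith)
  · have hη : 1 / (30 * (χ + 1)) * (χ / 2) ≤ 1 / 60 := by
      rw [div_mul_div_comm, div_le_div_iff₀ (by positivity) (by norm_num)]
      linarith
    calc ε ^ (-(2 / 5) : ℝ) = ε ^ (1 / 60 : ℝ) * ε ^ (-(5 / 12) : ℝ) := by
          rw [← rpow_add hε]
          norm_num
      _ ≤ ε ^ (-(1 / (30 * (χ + 1))) * -(χ / 2)) * ε ^ (-(5 / 12) : ℝ) := by
          gcongr ?_ * _
          exact rpow_le_rpow_of_exponent_ge hε hε1 (by linarith)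
      _ ≤ τ ^ (-(χ / 2)) * ε ^ (-(5 / 12) : ℝ) := by
          rw [rpow_mul hε.le]
          gcongr ?_ * _
          exact rpow_le_rpow_of_nonpos (by linarith) hτε (by linarith)
      _ = wkbAmplitude χ ε (τ * ε ^ (-(1 / 2) : ℝ)) := hamp.symm
  · rw [hamp]
    exact mul_le_of_le_one_left (rpow_pos_of_pos hε _).le
      (rpow_le_one_of_one_le_of_nonpos (by linarith) (by linarith))
  · rwa [mul_pow, rpow_neg_half_sq hε, mul_left_comm, mul_inv_cancel₀ hε.ne', mul_one]

theorem eventually_exists_isWKBCutoff (hχ : 0 ≤ χ) :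
    ∀ᶠ ε : ℝ in 𝓝[>] 0, ∃ T, IsWKBCutoff χ ε T := by
  have hβ : 0 < χ / 2 + 5 / 6 := by positivity
  have hlog := (tendsto_log_atTop.comp tendsto_inv_nhdsGT_zero).eventually_ge_atTop
    ((χ + 4) / (χ / 2 + 5 / 6))
  filter_upwards [hlog, eventually_mul_log_inv_le_rpow_neg hβ
    (show 0 < 1 / (15 * (χ + 1)) by positivity), self_mem_nhdsWithin,
    eventually_const_mul_rpow_le_one 1 one_pos] with ε hlog hlogle hε hε1
  have hε0 : (0 : ℝ) < ε := hε
  rw [one_mul, rpow_one] at hε1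
  rw [Function.comp_apply, div_le_iff₀' hβ] at hlog
  have hτ2 := sq_sqrt (show 0 ≤ (χ / 2 + 5 / 6) * log ε⁻¹ by linarith)
  refine ⟨_, isWKBCutoff_mul_rpow_neg_half hχ hε0 hε1 (le_sqrt_of_sq_le (by linarith))
    (by rw [hτ2]; linarith) hτ2 (sqrt_le_iff.2 ⟨by positivity, hlogle.trans_eq ?_⟩)⟩
  rw [← rpow_mul_natCast hε0.le]
  congr 1
  push_cast
  field_simp
  norm_num

end Cutoff

/-! ### Amplitude of the rescaled solution -/

/-- The rescaled eigenvalue problem: the solution of `u'' + (w - κ ε) u = 0` on `[0, ∞)` with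
`u 0 = 0`, `u' 0 = 1`, assumed to vanish at infinity. -/
structure IsScaledSolution (χ κ ε : ℝ) (u v : ℝ → ℝ) : Prop extends
    IsOscillator (fun t ↦ scaledWeight χ ε t - κ * ε) u v (Set.Ici 0) where
  fst_zero : u 0 = 0
  snd_zero : v 0 = 1
  tendsto_zero : Filter.Tendsto u Filter.atTop (𝓝 0)

/-- The constant comparing the WKB energy of every rescaled solution with `1`, uniformly in `ε`. -/
noncomputable def wkbConst (χ : ℝ) : ℝ := 384 * (rexp 2 * rexp 2) * wkbStart χ ^ (χ / 2)

theorem one_le_wkbConst {χ : ℝ} (hχ : 0 ≤ χ) : 1 ≤ wkbConst χ := by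
  have hpow : 1 ≤ wkbStart χ ^ (χ / 2) := by
    refine one_le_rpow ?_ (by positivity)
    unfold wkbStart
    linarith
  have hexp : 1 ≤ rexp 2 := one_le_exp zero_le_two
  unfold wkbConst
  nlinarith [one_le_mul_of_one_le_of_one_le (one_le_mul_of_one_le_of_one_le hexp hexp) hpow]

theorem IsFirstTurningPoint.le_eight {u v : ℝ → ℝ} {x₁ : ℝ} (X : IsFirstTurningPoint u v x₁) :
    u x₁ ≤ 8 := by
  linarith [X.le_two_mul x₁ ⟨by linarith [X.one_le], le_rfl⟩, X.le_four]

section Amplitude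

variable {χ κ ε a T x₁ t : ℝ} {u v : ℝ → ℝ}

theorem wkbEnergy_wkbAmplitude (ht : 0 < t) : wkbEnergy (wkbAmplitude χ ε) u v t
    = wkbAmplitude χ ε t * (v t ^ 2 + scaledWeight χ ε t * u t ^ 2) := by
  have hh := wkbAmplitude_pos (χ := χ) (ε := ε) ht
  rw [scaledWeight_eq_one_div_sq ht, wkbEnergy]
  field_simp

namespace IsAsymptoticRegime

theorem deriv_scaledWeight_ge (R : IsAsymptoticRegime χ κ ε) (ht : 1 ≤ t)
    (htb : t ≤ ε ^ (-(1 / 2) : ℝ)) :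
    -(4 * ε * t * (scaledWeight χ ε t - κ * ε)) ≤ (χ / t - 2 * ε * t) * scaledWeight χ ε t := by
  have hw := R.scaledWeight_ge_quarter ht htb
  have hκε := R.kappa_mul_le
  have hχ := R.weight_nonneg
  have hε := R.pos
  have hχt : 0 ≤ χ / t * scaledWeight χ ε t := by positivity
  have hεt : 0 ≤ 2 * ε * t * (scaledWeight χ ε t - 2 * (κ * ε)) :=
    mul_nonneg (by positivity) (by linarith)
  linarith

theorem exp_two_mul_start_le (R : IsAsymptoticRegime χ κ ε) :
    rexp (2 * (ε * wkbStart χ ^ 2)) ≤ rexp 2 :=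
  exp_le_exp.2 (by linarith [R.start_sq_mul_le])

theorem start_mem_Icc (R : IsAsymptoticRegime χ κ ε) (X : IsFirstTurningPoint u v x₁) :
    wkbStart χ ∈ Set.Icc x₁ (ε ^ (-(1 / 2) : ℝ)) :=
  ⟨X.le_four.trans R.four_le_start, R.start_le⟩

theorem start_le_cutoff (R : IsAsymptoticRegime χ κ ε) (C : IsWKBCutoff χ ε T) :
    wkbStart χ ≤ T := by
  linarith [R.start_le, C.two_mul_le, rpow_pos_of_pos R.pos (-(1 / 2))]

theorem wkbAmplitude_le_rpow (R : IsAsymptoticRegime χ κ ε) (C : IsWKBCutoff χ ε T)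
    (ht : t ∈ Set.Icc (wkbStart χ) T) : wkbAmplitude χ ε t ≤ ε ^ (-(5 / 12) : ℝ) := by
  have hmax := wkbAmplitude_le_max R.weight_nonneg R.pos.le (by linarith [R.four_le_start]) ht
  refine hmax.trans (max_le (R.wkbAmplitude_start_le_two.trans ?_) C.amplitude_le_rpow)
  rw [rpow_neg R.pos.le, ← one_div, le_div_iff₀ (rpow_pos_of_pos R.pos _)]
  linarith [R.rpow_le (r := 5 / 12) (by norm_num)]

theorem neg_half_le_wkbAmplitudeDeriv (R : IsAsymptoticRegime χ κ ε) (ht : wkbStart χ ≤ t) :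
    -(1 / 2) ≤ wkbAmplitudeDeriv χ ε t := by
  have ha : 0 < wkbStart χ := by linarith [R.four_le_start]
  refine le_trans ?_ (wkbAmplitudeDeriv_mono R.weight_nonneg R.pos.le ha ht)
  have hlog : -(1 / 4) ≤ wkbLogDeriv χ ε (wkbStart χ) := by
    have hχa : χ / (2 * wkbStart χ) ≤ 1 / 4 := by
      rw [div_le_iff₀ (by positivity), wkbStart]
      linarith
    linarith [mul_nonneg R.pos.le ha.le,
      show wkbLogDeriv χ ε (wkbStart χ) = ε * wkbStart χ - χ / (2 * wkbStart χ) from rfl]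
  have hh := wkbAmplitude_pos (χ := χ) (ε := ε) ha
  unfold wkbAmplitudeDeriv
  nlinarith [R.wkbAmplitude_start_le_two]

theorem wkbAmplitudeDeriv_le_half (R : IsAsymptoticRegime χ κ ε) (C : IsWKBCutoff χ ε T)
    (ht0 : 0 < t) (ht : t ≤ T) : wkbAmplitudeDeriv χ ε t ≤ 1 / 2 := by
  have hχ := R.weight_nonneg
  have hε := R.pos
  have hT0 : 0 < T := ht0.trans_le ht
  have hhT := wkbAmplitude_pos (χ := χ) (ε := ε) hT0
  calc wkbAmplitudeDeriv χ ε t ≤ wkbAmplitudeDeriv χ ε T := wkbAmplitudeDeriv_mono hχ hε.le ht0 ht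
    _ ≤ ε * T * wkbAmplitude χ ε T := by
        unfold wkbAmplitudeDeriv wkbLogDeriv
        gcongr
        exact sub_le_self _ (by positivity)
    _ ≤ ε * ε ^ (-(11 / 20) : ℝ) * ε ^ (-(5 / 12) : ℝ) := by
        gcongr
        · exact C.le_rpow
        · exact C.amplitude_le_rpow
    _ = ε ^ (1 / 30 : ℝ) := by
        rw [← rpow_one_add' hε.le (by norm_num), ← rpow_add hε]
        norm_num
    _ ≤ 1 / 2 := by linarith [R.rpow_le (r := 1 / 30) le_rfl]

theorem isSlowAmplitude (R : IsAsymptoticRegime χ κ ε) (C : IsWKBCutoff χ ε T) :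
    IsSlowAmplitude (κ * ε) (wkbAmplitude χ ε) (wkbAmplitudeDeriv χ ε) (wkbAmplitudeDeriv2 χ ε)
      (Set.Icc (wkbStart χ) T) := by
  have hε := R.pos
  have hκ := R.kappa_nonneg
  have hpos : ∀ t ∈ Set.Icc (wkbStart χ) T, 0 < t := fun t ht ↦ by
    linarith [R.four_le_start, ht.1]
  refine ⟨fun t ht ↦ wkbAmplitude_pos (hpos t ht), fun t ht ↦ hasDerivAt_wkbAmplitude (hpos t ht),
    fun t ht ↦ hasDerivAt_wkbAmplitudeDeriv (hpos t ht), fun t ht ↦ abs_le.2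
      ⟨R.neg_half_le_wkbAmplitudeDeriv ht.1, R.wkbAmplitudeDeriv_le_half C (hpos t ht) ht.2⟩,
    fun t ht ↦ ?_, fun t ht ↦ ?_⟩
  · have hh := wkbAmplitude_pos (χ := χ) (ε := ε) (hpos t ht)
    calc κ * ε * wkbAmplitude χ ε t ^ 2 ≤ κ * ε * (ε ^ (-(5 / 12) : ℝ)) ^ 2 := by
          gcongr
          exact R.wkbAmplitude_le_rpow C ht
      _ = κ * ε ^ (1 / 6 : ℝ) := by
          rw [← rpow_mul_natCast hε.le, mul_assoc, ← rpow_one_add' hε.le (by norm_num)]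
          norm_num
      _ ≤ 1 / 4 := by linarith [R.kappa_mul_rpow_le (r := 1 / 6) (by norm_num)]
  · have := wkbAmplitude_pos (χ := χ) (ε := ε) (hpos t ht)
    have hsmall : 4 * (κ * √ε * wkbAmplitude χ ε t) ≤ 1 := by
      have hle : κ * √ε * wkbAmplitude χ ε t ≤ κ * ε ^ (1 / 12 : ℝ) := calc
        κ * √ε * wkbAmplitude χ ε t ≤ κ * √ε * ε ^ (-(5 / 12) : ℝ) := by
            gcongr
            exact R.wkbAmplitude_le_rpow C ht
        _ = κ * ε ^ (1 / 12 : ℝ) := by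
            rw [sqrt_eq_rpow, mul_assoc, ← rpow_add hε]
            norm_num
      linarith [R.kappa_mul_rpow_le (r := 1 / 12) (by norm_num)]
    calc 8 * (κ * ε) * |wkbAmplitudeDeriv χ ε t| * wkbAmplitude χ ε t
        = 4 * (κ * √ε * wkbAmplitude χ ε t) * (2 * √ε * |wkbAmplitudeDeriv χ ε t|) := by
          linear_combination (-8 * κ * |wkbAmplitudeDeriv χ ε t| * wkbAmplitude χ ε t)
            * sq_sqrt hε.le
      _ ≤ 2 * √ε * |wkbAmplitudeDeriv χ ε t| := mul_le_of_le_one_left (by positivity) hsmall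
      _ ≤ wkbAmplitudeDeriv2 χ ε t :=
          two_mul_sqrt_mul_abs_wkbAmplitudeDeriv_le R.weight_nonneg hε.le (hpos t ht)

end IsAsymptoticRegime

namespace IsScaledSolution

theorem exists_isFirstTurningPoint (R : IsAsymptoticRegime χ κ ε)
    (S : IsScaledSolution χ κ ε u v) : ∃ x₁, IsFirstTurningPoint u v x₁ := by
  refine (S.mono Set.Icc_subset_Ici_self).exists_isFirstTurningPoint S.fst_zero S.snd_zero
    (fun t ht ↦ ?_) (fun t ht ↦ ?_) fun t ht ↦ ?_
  · linarith [R.kappa_mul_le, scaledWeight_nonneg (χ := χ) (ε := ε) ht.1]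
  · linarith [R.kappa_mul_nonneg, scaledWeight_le_rpow (χ := χ) R.pos.le ht.1,
      rpow_le_one ht.1 ht.2 R.weight_nonneg]
  · linarith [R.kappa_mul_le, R.three_quarters_le_scaledWeight ht]

theorem mono_Icc (S : IsScaledSolution χ κ ε u v) (ha : 0 ≤ a) :
    IsOscillator (fun t ↦ scaledWeight χ ε t - κ * ε) u v (Set.Icc a T) :=
  S.mono fun _ hx ↦ ha.trans hx.1

theorem amplitude_le (R : IsAsymptoticRegime χ κ ε) (S : IsScaledSolution χ κ ε u v)
    (X : IsFirstTurningPoint u v x₁) (ht : t ∈ Set.Icc x₁ (ε ^ (-(1 / 2) : ℝ))) :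
    u t ^ 2 + v t ^ 2 / (scaledWeight χ ε t - κ * ε) ≤ rexp (2 * (ε * t ^ 2)) * u x₁ ^ 2 := by
  have hε := R.pos
  have hx₁ := X.one_le
  have hgrow := (S.mono_Icc (by linarith)).amplitude_le_exp_mul
    (p := fun t ↦ 2 * (ε * t ^ 2)) (p' := fun t ↦ 4 * ε * t) ht.1
    (fun x hx ↦ by
      linarith [R.scaledWeight_ge_quarter (hx₁.trans hx.1) (hx.2.trans ht.2), R.kappa_mul_le])
    (fun x hx ↦ (hasDerivAt_scaledWeight (by linarith [hx.1])).sub_const _)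
    (fun x _ ↦ (((hasDerivAt_pow 2 x).const_mul ε).const_mul 2).congr_deriv
      (by push_cast; ring))
    (fun x hx ↦ mul_nonneg (by positivity) (by linarith [hx.1]))
    fun x hx ↦ R.deriv_scaledWeight_ge (hx₁.trans hx.1) (hx.2.trans ht.2)
  rw [X.deriv_eq_zero, zero_pow two_ne_zero, zero_div, add_zero] at hgrow
  refine hgrow.trans ?_
  gcongr
  exact sub_le_self _ (by positivity)

theorem energy_le (R : IsAsymptoticRegime χ κ ε) (S : IsScaledSolution χ κ ε u v)
    (X : IsFirstTurningPoint u v x₁) (ht : t ∈ Set.Icc x₁ (ε ^ (-(1 / 2) : ℝ))) :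
    (scaledWeight χ ε x₁ - κ * ε) * u x₁ ^ 2
      ≤ rexp (2 * (ε * t ^ 2)) * (v t ^ 2 + (scaledWeight χ ε t - κ * ε) * u t ^ 2) := by
  have hε := R.pos
  have hx₁ := X.one_le
  have hgrow := (S.mono_Icc (by linarith)).energy_le_exp_mul
    (p := fun t ↦ 2 * (ε * t ^ 2)) (p' := fun t ↦ 4 * ε * t) ht.1
    (fun x hx ↦ (hasDerivAt_scaledWeight (by linarith [hx.1])).sub_const _)
    (fun x _ ↦ (((hasDerivAt_pow 2 x).const_mul ε).const_mul 2).congr_deriv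
      (by push_cast; ring))
    (fun x hx ↦ mul_nonneg (by positivity) (by linarith [hx.1]))
    fun x hx ↦ R.deriv_scaledWeight_ge (hx₁.trans hx.1) (hx.2.trans ht.2)
  rw [X.deriv_eq_zero, zero_pow two_ne_zero, zero_add] at hgrow
  have hQ : 0 ≤ scaledWeight χ ε t - κ * ε := by
    linarith [R.scaledWeight_ge_quarter (hx₁.trans ht.1) ht.2, R.kappa_mul_le]
  refine hgrow.trans ?_
  gcongr
  exact sub_le_self _ (by positivity)

theorem abs_le_mul_one_add (R : IsAsymptoticRegime χ κ ε) (S : IsScaledSolution χ κ ε u v)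
    (X : IsFirstTurningPoint u v x₁) (ht : t ∈ Set.Icc x₁ (ε ^ (-(1 / 2) : ℝ))) :
    |u t| ≤ u x₁ * (1 + 2 * (ε * t ^ 2)) := by
  have ht1 : 1 ≤ t := X.one_le.trans ht.1
  have hεt : 0 ≤ ε * t ^ 2 := mul_nonneg R.pos.le (sq_nonneg t)
  have hu₁ : 0 ≤ u x₁ := by linarith [X.two_thirds_le]
  have hexp : rexp (ε * t ^ 2) ≤ 1 + 2 * (ε * t ^ 2) := by
    have habs := abs_exp_sub_one_le (x := ε * t ^ 2)
      (by rw [abs_of_nonneg hεt]; exact R.mul_sq_le_one (by linarith) ht.2)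
    rw [abs_of_nonneg hεt] at habs
    linarith [le_abs_self (rexp (ε * t ^ 2) - 1)]
  have hsq : u t ^ 2 ≤ (u x₁ * rexp (ε * t ^ 2)) ^ 2 := by
    have hv : 0 ≤ v t ^ 2 / (scaledWeight χ ε t - κ * ε) := div_nonneg (sq_nonneg _) (by
      linarith [R.scaledWeight_ge_quarter ht1 ht.2, R.kappa_mul_le])
    have hamp := S.amplitude_le R X ht
    rw [mul_pow, ← exp_nat_mul, Nat.cast_ofNat]
    linarith
  calc |u t| ≤ u x₁ * rexp (ε * t ^ 2) := abs_le_of_sq_le_sq hsq (by positivity)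
    _ ≤ u x₁ * (1 + 2 * (ε * t ^ 2)) := by gcongr

theorem wkbEnergy_start_le (R : IsAsymptoticRegime χ κ ε) (S : IsScaledSolution χ κ ε u v)
    (X : IsFirstTurningPoint u v x₁) :
    wkbEnergy (wkbAmplitude χ ε) u v (wkbStart χ) ≤ 128 * rexp 2 * wkbStart χ ^ (χ / 2) := by
  set a := wkbStart χ
  have ha : 4 ≤ a := R.four_le_start
  have hh := wkbAmplitude_pos (χ := χ) (ε := ε) (t := a) (by linarith)
  have hQ : 0 < scaledWeight χ ε a - κ * ε := by
    linarith [R.scaledWeight_ge_quarter (t := a) (by linarith) R.start_le, R.kappa_mul_le]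
  have hamp : u a ^ 2 + v a ^ 2 / (scaledWeight χ ε a - κ * ε) ≤ rexp 2 * 64 := calc
    _ ≤ rexp (2 * (ε * a ^ 2)) * u x₁ ^ 2 := S.amplitude_le R X (R.start_mem_Icc X)
    _ ≤ rexp 2 * 64 := by
      have hu₁ : u x₁ ^ 2 ≤ 64 := by nlinarith [X.two_thirds_le, X.le_eight]
      gcongr ?_ * ?_
      exact R.exp_two_mul_start_le
  have hu : u a ^ 2 ≤ rexp 2 * 64 := le_trans (le_add_of_nonneg_right (by positivity)) hamp
  have hv : v a ^ 2 ≤ rexp 2 * 64 * (1 / wkbAmplitude χ ε a ^ 2) := by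
    rw [← scaledWeight_eq_one_div_sq (by linarith)]
    have hv' := (le_add_of_nonneg_left (sq_nonneg (u a))).trans hamp
    rw [div_le_iff₀ hQ] at hv'
    nlinarith [mul_nonneg (exp_pos 2).le R.kappa_mul_nonneg]
  calc wkbEnergy (wkbAmplitude χ ε) u v a
      ≤ wkbAmplitude χ ε a * (rexp 2 * 64 * (1 / wkbAmplitude χ ε a ^ 2))
        + rexp 2 * 64 / wkbAmplitude χ ε a := by
        unfold wkbEnergy
        gcongr
    _ = 128 * rexp 2 * (1 / wkbAmplitude χ ε a) := by
        field_simp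
        ring
    _ ≤ 128 * rexp 2 * a ^ (χ / 2) := by
        gcongr
        exact (div_le_iff₀ hh).2 R.one_le_mul_wkbAmplitude_start

theorem one_le_mul_wkbEnergy_start (R : IsAsymptoticRegime χ κ ε)
    (S : IsScaledSolution χ κ ε u v) (X : IsFirstTurningPoint u v x₁) :
    1 ≤ 9 * rexp 2 * wkbStart χ ^ (χ / 2) * wkbEnergy (wkbAmplitude χ ε) u v (wkbStart χ) := by
  set a := wkbStart χ
  have ha : 4 ≤ a := R.four_le_start
  have hw := scaledWeight_nonneg (χ := χ) (ε := ε) (t := a) (by linarith)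
  have hlower : 1 / 9 ≤ (scaledWeight χ ε x₁ - κ * ε) * u x₁ ^ 2 := by
    have hQ : 1 / 4 ≤ scaledWeight χ ε x₁ - κ * ε := by
      linarith [R.three_quarters_le_scaledWeight ⟨X.one_le, X.le_four⟩, R.kappa_mul_le]
    nlinarith [pow_le_pow_left₀ (by norm_num) X.two_thirds_le 2]
  have henergy : 1 / 9 ≤ rexp 2 * (v a ^ 2 + scaledWeight χ ε a * u a ^ 2) := calc
    1 / 9 ≤ _ := hlower.trans (S.energy_le R X (R.start_mem_Icc X))
    _ ≤ rexp (2 * (ε * a ^ 2)) * (v a ^ 2 + scaledWeight χ ε a * u a ^ 2) := by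
        gcongr
        exact sub_le_self _ R.kappa_mul_nonneg
    _ ≤ rexp 2 * (v a ^ 2 + scaledWeight χ ε a * u a ^ 2) := by
        gcongr ?_ * _
        exact R.exp_two_mul_start_le
  calc (1 : ℝ) ≤ (a ^ (χ / 2) * wkbAmplitude χ ε a)
        * (9 * (rexp 2 * (v a ^ 2 + scaledWeight χ ε a * u a ^ 2))) :=
        one_le_mul_of_one_le_of_one_le R.one_le_mul_wkbAmplitude_start (by linarith)
    _ = _ := by
        rw [wkbEnergy_wkbAmplitude (by linarith)]
        ring

theorem wkbEnergy_comparable_start (R : IsAsymptoticRegime χ κ ε)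
    (S : IsScaledSolution χ κ ε u v) (C : IsWKBCutoff χ ε T)
    (ht : t ∈ Set.Icc (wkbStart χ) T) :
    wkbEnergy (wkbAmplitude χ ε) u v t
        ≤ 3 * rexp 2 * wkbEnergy (wkbAmplitude χ ε) u v (wkbStart χ) ∧
      wkbEnergy (wkbAmplitude χ ε) u v (wkbStart χ)
        ≤ 3 * rexp 2 * wkbEnergy (wkbAmplitude χ ε) u v t := by
  have hpos : ∀ x ∈ Set.Icc (wkbStart χ) t, 0 < x := fun x hx ↦ by
    linarith [R.four_le_start, hx.1]
  have hosc : IsOscillator (fun t ↦ 1 / wkbAmplitude χ ε t ^ 2 - κ * ε) u v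
      (Set.Icc (wkbStart χ) t) :=
    ⟨fun x hx ↦ S.hasDerivAt_fst x (hpos x hx).le, fun x hx ↦ by
      rw [← scaledWeight_eq_one_div_sq (hpos x hx)]
      exact S.hasDerivAt_snd x (hpos x hx).le⟩
  exact ((R.isSlowAmplitude C).mono (Set.Icc_subset_Icc_right ht.2)).wkbEnergy_comparable
    R.kappa_mul_nonneg hosc ht.1

theorem wkbEnergy_le (R : IsAsymptoticRegime χ κ ε) (S : IsScaledSolution χ κ ε u v)
    (C : IsWKBCutoff χ ε T) (ht : t ∈ Set.Icc (wkbStart χ) T) :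
    wkbEnergy (wkbAmplitude χ ε) u v t ≤ wkbConst χ := by
  obtain ⟨x₁, X⟩ := S.exists_isFirstTurningPoint R
  calc wkbEnergy (wkbAmplitude χ ε) u v t
      ≤ 3 * rexp 2 * wkbEnergy (wkbAmplitude χ ε) u v (wkbStart χ) :=
        (S.wkbEnergy_comparable_start R C ht).1
    _ ≤ 3 * rexp 2 * (128 * rexp 2 * wkbStart χ ^ (χ / 2)) := by
        gcongr
        exact S.wkbEnergy_start_le R X
    _ = wkbConst χ := by
        unfold wkbConst
        ring

theorem one_le_mul_wkbEnergy (R : IsAsymptoticRegime χ κ ε) (S : IsScaledSolution χ κ ε u v)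
    (C : IsWKBCutoff χ ε T) (ht : t ∈ Set.Icc (wkbStart χ) T) :
    1 ≤ wkbConst χ * wkbEnergy (wkbAmplitude χ ε) u v t := by
  obtain ⟨x₁, X⟩ := S.exists_isFirstTurningPoint R
  have ha : 0 < wkbStart χ := by linarith [R.four_le_start]
  have hE := wkbEnergy_nonneg (u := u) (v := v)
    (wkbAmplitude_pos (χ := χ) (ε := ε) (ha.trans_le ht.1))
  have hm : 0 ≤ rexp 2 * rexp 2 * wkbStart χ ^ (χ / 2) * wkbEnergy (wkbAmplitude χ ε) u v t := by
    positivity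
  calc (1 : ℝ) ≤ 9 * rexp 2 * wkbStart χ ^ (χ / 2)
        * wkbEnergy (wkbAmplitude χ ε) u v (wkbStart χ) := S.one_le_mul_wkbEnergy_start R X
    _ ≤ 9 * rexp 2 * wkbStart χ ^ (χ / 2)
        * (3 * rexp 2 * wkbEnergy (wkbAmplitude χ ε) u v t) := by
        gcongr
        exact (S.wkbEnergy_comparable_start R C ht).2
    _ ≤ wkbConst χ * wkbEnergy (wkbAmplitude χ ε) u v t := by
        unfold wkbConst
        linarith

end IsScaledSolution

end Amplitude

/-! ### The norm integral -/

section Integral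

variable {f f' g r r' η : ℝ → ℝ} {a b M : ℝ}

theorem integral_le_sub_of_le_hasDerivAt (hab : a ≤ b)
    (hf : ∀ x ∈ Set.Icc a b, HasDerivAt f (f' x) x) (hg : IntegrableOn g (Set.Icc a b))
    (hle : ∀ x ∈ Set.Ioo a b, g x ≤ f' x) : ∫ x in a..b, g x ≤ f b - f a :=
  intervalIntegral.integral_le_sub_of_hasDeriv_right_of_le hab
    (fun x hx ↦ (hf x hx).continuousAt.continuousWithinAt)
    (fun x hx ↦ (hf x (Set.Ioo_subset_Icc_self hx)).hasDerivWithinAt) hg hle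

theorem sub_le_integral_of_hasDerivAt_le (hab : a ≤ b)
    (hf : ∀ x ∈ Set.Icc a b, HasDerivAt f (f' x) x) (hg : IntegrableOn g (Set.Icc a b))
    (hle : ∀ x ∈ Set.Ioo a b, f' x ≤ g x) : f b - f a ≤ ∫ x in a..b, g x :=
  intervalIntegral.sub_le_integral_of_hasDeriv_right_of_le hab
    (fun x hx ↦ (hf x hx).continuousAt.continuousWithinAt)
    (fun x hx ↦ (hf x (Set.Ioo_subset_Icc_self hx)).hasDerivWithinAt) hg hle

theorem abs_integral_sub_le_of_hasDerivAt (hab : a ≤ b)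
    (hf : ∀ x ∈ Set.Icc a b, HasDerivAt f (f' x) x) (hr : ∀ x ∈ Set.Icc a b, HasDerivAt r (r' x) x)
    (hg : IntegrableOn g (Set.Icc a b)) (hle : ∀ x ∈ Set.Ioo a b, |g x - f' x| ≤ r' x) :
    |(∫ x in a..b, g x) - (f b - f a)| ≤ r b - r a := by
  have hupper := integral_le_sub_of_le_hasDerivAt hab
    (fun x hx ↦ (hf x hx).fun_add (hr x hx)) hg fun x hx ↦ by linarith [(abs_le.1 (hle x hx)).2]
  have hlower := sub_le_integral_of_hasDerivAt_le hab
    (fun x hx ↦ (hf x hx).fun_sub (hr x hx)) hg fun x hx ↦ by linarith [(abs_le.1 (hle x hx)).1]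
  exact abs_le.2 ⟨by linarith, by linarith⟩

theorem integral_Ioi_le_of_forall_intervalIntegral_le (hg : IntegrableOn g (Set.Ioi a))
    (hη : Filter.Tendsto η Filter.atTop (𝓝 0))
    (hle : ∀ b, a ≤ b → ∫ x in a..b, g x ≤ M + η b) : ∫ x in Set.Ioi a, g x ≤ M := by
  have hlim : Filter.Tendsto (fun b ↦ M + η b) Filter.atTop (𝓝 M) := by
    simpa only [add_zero] using hη.const_add M
  refine le_of_tendsto_of_tendsto
    (intervalIntegral_tendsto_integral_Ioi a hg Filter.tendsto_id) hlim ?_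
  filter_upwards [Filter.eventually_ge_atTop a] with b hb using hle b hb

end Integral

section Norm

variable {χ κ ε r T x₁ t : ℝ} {u v : ℝ → ℝ}

theorem inv_wkbAmplitude (ht : 0 < t) :
    (wkbAmplitude χ ε t)⁻¹ = t ^ (χ / 2) * rexp (-(ε / 2) * t ^ 2) := by
  rw [wkbAmplitude, rpow_neg ht.le, mul_inv, inv_inv, ← exp_neg]
  ring_nf

theorem integrableOn_rpow_mul_scaledWeight (hε : 0 < ε) (hr : -1 < r + χ) :
    IntegrableOn (fun t ↦ t ^ r * scaledWeight χ ε t) (Set.Ioi 0) := by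
  refine (integrableOn_rpow_mul_exp_neg_mul_sq hε hr).congr_fun (fun t ht ↦ ?_) measurableSet_Ioi
  simp only [scaledWeight]
  rw [rpow_add ht, neg_mul, mul_assoc]

theorem integrableOn_scaledWeight (hχ : 0 ≤ χ) (hε : 0 < ε) :
    IntegrableOn (scaledWeight χ ε) (Set.Ioi 0) := by
  simpa only [rpow_zero, one_mul] using
    integrableOn_rpow_mul_scaledWeight (r := 0) (χ := χ) hε (by linarith)

theorem Icc_subset_Ioi_zero {a b : ℝ} (ha : 0 < a) : Set.Icc a b ⊆ Set.Ioi 0 :=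
  fun _ hx ↦ ha.trans_le hx.1

namespace IsScaledSolution

theorem continuousOn (S : IsScaledSolution χ κ ε u v) : ContinuousOn u (Set.Ici 0) :=
  fun t ht ↦ (S.hasDerivAt_fst t ht).continuousAt.continuousWithinAt

theorem exists_abs_le (S : IsScaledSolution χ κ ε u v) : ∃ B, ∀ t, 0 ≤ t → |u t| ≤ B := by
  obtain ⟨M, hM⟩ := Filter.eventually_atTop.1
    (S.tendsto_zero.abs.eventually_le_const (show |(0 : ℝ)| < 1 by norm_num))
  obtain ⟨B, hB⟩ := isCompact_Icc.exists_bound_of_continuousOn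
    (S.continuousOn.mono (Set.Icc_subset_Ici_self : Set.Icc 0 M ⊆ _))
  refine ⟨max B 1, fun t ht ↦ ?_⟩
  rcases le_total t M with htM | hMt
  · exact le_max_of_le_left (hB t ⟨ht, htM⟩)
  · exact le_max_of_le_right (hM t hMt)

theorem integrableOn_rpow_mul_weight_mul (S : IsScaledSolution χ κ ε u v) (hε : 0 < ε)
    (hr : -1 < r + χ) : IntegrableOn (fun t ↦ t ^ r * scaledWeight χ ε t * u t) (Set.Ioi 0) := by
  obtain ⟨B, hB⟩ := S.exists_abs_le
  refine (integrableOn_rpow_mul_scaledWeight hε hr).mul_bdd (c := B)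
    ((S.continuousOn.mono Set.Ioi_subset_Ici_self).aestronglyMeasurable measurableSet_Ioi) ?_
  filter_upwards [ae_restrict_mem measurableSet_Ioi] with t ht using hB t (le_of_lt ht)

theorem integrableOn_weight_mul_sq (S : IsScaledSolution χ κ ε u v) (hχ : 0 ≤ χ) (hε : 0 < ε) :
    IntegrableOn (fun t ↦ scaledWeight χ ε t * u t ^ 2) (Set.Ioi 0) := by
  obtain ⟨B, hB⟩ := S.exists_abs_le
  refine (integrableOn_scaledWeight hχ hε).mul_bdd (c := B ^ 2)
    (((S.continuousOn.mono Set.Ioi_subset_Ici_self).pow 2).aestronglyMeasurable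
      measurableSet_Ioi) ?_
  filter_upwards [ae_restrict_mem measurableSet_Ioi] with t ht
  rw [norm_pow]
  exact pow_le_pow_left₀ (norm_nonneg _) (hB t (le_of_lt ht)) 2

theorem abs_le_twenty_four (R : IsAsymptoticRegime χ κ ε) (S : IsScaledSolution χ κ ε u v)
    (ht0 : 0 ≤ t) (ht : t ≤ ε ^ (-(1 / 2) : ℝ)) : |u t| ≤ 24 := by
  obtain ⟨x₁, X⟩ := S.exists_isFirstTurningPoint R
  rcases le_total t x₁ with htx | hxt
  · rw [abs_of_nonneg (X.nonneg t ⟨ht0, htx⟩)]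
    linarith [X.le_two_mul t ⟨ht0, htx⟩, X.le_four]
  · calc |u t| ≤ u x₁ * (1 + 2 * (ε * t ^ 2)) := S.abs_le_mul_one_add R X ⟨hxt, ht⟩
      _ ≤ 8 * (1 + 2 * 1) := by
        have hε := R.pos
        gcongr
        · exact X.le_eight
        · exact R.mul_sq_le_one ht0 ht
      _ = 24 := by norm_num

end IsScaledSolution

/- From `χ ≤ ε T²` on, `-w' / w = 2 ε t - χ / t` is at least `ε T`. -/
theorem mul_le_neg_logDeriv_scaledWeight (hε : 0 ≤ ε) (hT : 0 < T) (hχT : χ ≤ ε * T ^ 2)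
    (ht : T ≤ t) : ε * T ≤ 2 * ε * t - χ / t := by
  have hχt : χ / t ≤ ε * t := by
    rw [div_le_iff₀ (hT.trans_le ht)]
    calc χ ≤ ε * T ^ 2 := hχT
      _ ≤ ε * t ^ 2 := by gcongr
      _ = ε * t * t := by ring
  nlinarith

theorem integral_Ioi_scaledWeight_le (hχ : 0 ≤ χ) (hε : 0 < ε) (hT : 0 < T)
    (hχT : χ ≤ ε * T ^ 2) :
    ∫ t in Set.Ioi T, scaledWeight χ ε t ≤ scaledWeight χ ε T / (ε * T) := by
  have hεT : 0 < ε * T := by positivity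
  have hint := integrableOn_scaledWeight hχ hε
  refine integral_Ioi_le_of_forall_intervalIntegral_le (η := fun _ ↦ 0)
    (hint.mono_set (Set.Ioi_subset_Ioi hT.le)) tendsto_const_nhds fun b hb ↦ ?_
  have hcmp := integral_le_sub_of_le_hasDerivAt (f := fun t ↦ -(scaledWeight χ ε t / (ε * T))) hb
    (fun x hx ↦ ((hasDerivAt_scaledWeight (by linarith [hx.1])).div_const _).fun_neg)
    (hint.mono_set (Icc_subset_Ioi_zero hT)) fun x hx ↦ by
      rw [← neg_div, le_div_iff₀ hεT]
      nlinarith [mul_le_neg_logDeriv_scaledWeight hε.le hT hχT hx.1.le,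
        scaledWeight_nonneg (χ := χ) (ε := ε) (t := x) (by linarith [hx.1])]
  have hb0 : 0 ≤ scaledWeight χ ε b / (ε * T) :=
    div_nonneg (scaledWeight_nonneg (by linarith)) hεT.le
  linarith

/- The energy `v² + (w - κ ε) u²` has derivative `w' u² ≤ -ε T w u²`. -/
theorem IsScaledSolution.integral_Ioi_weight_mul_sq_le (R : IsAsymptoticRegime χ κ ε)
    (S : IsScaledSolution χ κ ε u v) (hT : 0 < T) (hχT : χ ≤ ε * T ^ 2) :
    ∫ t in Set.Ioi T, scaledWeight χ ε t * u t ^ 2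
      ≤ (v T ^ 2 + scaledWeight χ ε T * u T ^ 2) / (ε * T) := by
  have hε := R.pos
  have hκε := R.kappa_mul_nonneg
  have hεT : 0 < ε * T := by positivity
  have hint := S.integrableOn_weight_mul_sq R.weight_nonneg hε
  have hlim : Filter.Tendsto (fun b ↦ κ * ε / (ε * T) * u b ^ 2) Filter.atTop (𝓝 0) := by
    simpa using (S.tendsto_zero.pow 2).const_mul (κ * ε / (ε * T))
  refine integral_Ioi_le_of_forall_intervalIntegral_le
    (hint.mono_set (Set.Ioi_subset_Ioi hT.le)) hlim fun b hb ↦ ?_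
  have hcmp := integral_le_sub_of_le_hasDerivAt
    (f := fun t ↦ -((v t ^ 2 + (scaledWeight χ ε t - κ * ε) * u t ^ 2) / (ε * T))) hb
    (fun x hx ↦ ((S.hasDerivAt_energy (show 0 ≤ x by linarith [hx.1])
      ((hasDerivAt_scaledWeight (by linarith [hx.1])).sub_const _)).div_const _).fun_neg)
    (hint.mono_set (Icc_subset_Ioi_zero hT)) fun x hx ↦ by
      have hw := scaledWeight_nonneg (χ := χ) (ε := ε) (t := x) (by linarith [hx.1])
      rw [← neg_div, le_div_iff₀ hεT]
      nlinarith [mul_le_neg_logDeriv_scaledWeight hε.le hT hχT hx.1.le,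
        mul_nonneg hw (sq_nonneg (u x))]
  refine hcmp.trans ?_
  have hb0 : 0 ≤ scaledWeight χ ε b * u b ^ 2 :=
    mul_nonneg (scaledWeight_nonneg (by linarith)) (sq_nonneg _)
  have hT0 : 0 ≤ κ * ε * u T ^ 2 := by positivity
  rw [div_mul_eq_mul_div, ← add_div, neg_sub_neg, ← sub_div]
  exact (div_le_div_iff_of_pos_right hεT).2 (by linarith [sq_nonneg (v b)])

theorem rpow_mul_exp_le_inv_wkbAmplitude (hχ : 0 ≤ χ) (hε : 0 < ε)
    (ht : t ∈ Set.Icc (ε ^ (-(1 / 2) : ℝ)) (2 * ε ^ (-(1 / 2) : ℝ))) :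
    (ε ^ (-(1 / 2) : ℝ)) ^ (χ / 2) * rexp (-2) ≤ (wkbAmplitude χ ε t)⁻¹ := by
  have hb : 0 < ε ^ (-(1 / 2) : ℝ) := rpow_pos_of_pos hε _
  have ht0 : 0 < t := hb.trans_le ht.1
  have hεt : ε * t ^ 2 ≤ 4 := calc
    ε * t ^ 2 ≤ ε * (2 * ε ^ (-(1 / 2) : ℝ)) ^ 2 := by
        gcongr
        exact ht.2
    _ = 4 := by
        rw [mul_pow, rpow_neg_half_sq hε]
        field_simp
        norm_num
  rw [inv_wkbAmplitude ht0]
  gcongr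
  · exact ht.1
  · linarith

namespace IsScaledSolution

theorem abs_mul_le (R : IsAsymptoticRegime χ κ ε) (S : IsScaledSolution χ κ ε u v)
    (C : IsWKBCutoff χ ε T) (ht : t ∈ Set.Icc (wkbStart χ) T) :
    |u t * v t| ≤ wkbConst χ / 2 := by
  have hh : 0 < wkbAmplitude χ ε t := wkbAmplitude_pos (by linarith [R.four_le_start, ht.1])
  linarith [two_mul_abs_mul_le_wkbEnergy (u := u) (v := v) hh, S.wkbEnergy_le R C ht]

theorem rpow_mul_exp_div_le_energy (R : IsAsymptoticRegime χ κ ε)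
    (S : IsScaledSolution χ κ ε u v) (C : IsWKBCutoff χ ε T)
    (ht : t ∈ Set.Icc (ε ^ (-(1 / 2) : ℝ)) (2 * ε ^ (-(1 / 2) : ℝ))) :
    (ε ^ (-(1 / 2) : ℝ)) ^ (χ / 2) * rexp (-2) / wkbConst χ
      ≤ v t ^ 2 + scaledWeight χ ε t * u t ^ 2 := by
  have hC := one_le_wkbConst R.weight_nonneg
  have ht0 : 0 < t := (rpow_pos_of_pos R.pos _).trans_le ht.1
  have hh := wkbAmplitude_pos (χ := χ) (ε := ε) ht0
  have hE := S.one_le_mul_wkbEnergy R C ⟨R.start_le.trans ht.1, ht.2.trans C.two_mul_le⟩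
  rw [wkbEnergy_wkbAmplitude ht0] at hE
  rw [div_le_iff₀' (by linarith)]
  calc (ε ^ (-(1 / 2) : ℝ)) ^ (χ / 2) * rexp (-2) ≤ (wkbAmplitude χ ε t)⁻¹ :=
        rpow_mul_exp_le_inv_wkbAmplitude R.weight_nonneg R.pos ht
    _ ≤ wkbConst χ * (v t ^ 2 + scaledWeight χ ε t * u t ^ 2) := by
        rw [inv_le_iff_one_le_mul₀' hh]
        linarith

theorem rpow_neg_half_rpow_mul_self (hε : 0 < ε) :
    (ε ^ (-(1 / 2) : ℝ)) ^ (χ / 2) * ε ^ (-(1 / 2) : ℝ) = ε ^ (-((χ + 2) / 4)) := by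
  rw [← rpow_mul hε.le, ← rpow_add hε]
  ring_nf

/- Equipartition on `[b, 2b]`, `b = ε^{-1/2}`: since `(u v)' = v² - w u² + κ ε u²` and `u v` is
bounded, `2 ∫ w u²` is at least `∫ (v² + w u²)` up to a constant. -/
theorem le_two_mul_integral_weight_mul_sq (R : IsAsymptoticRegime χ κ ε)
    (S : IsScaledSolution χ κ ε u v) (C : IsWKBCutoff χ ε T) :
    ε ^ (-((χ + 2) / 4)) * rexp (-2) / wkbConst χ - wkbConst χ
      ≤ 2 * ∫ t in Set.Ioi 0, scaledWeight χ ε t * u t ^ 2 := by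
  have hε := R.pos
  rw [← rpow_neg_half_rpow_mul_self hε]
  set b : ℝ := ε ^ (-(1 / 2) : ℝ)
  set m : ℝ := b ^ (χ / 2) * rexp (-2) / wkbConst χ
  have hb : 0 < b := rpow_pos_of_pos hε _
  have hb2 : b ≤ 2 * b := by linarith
  have hsub : Set.Icc b (2 * b) ⊆ Set.Icc (wkbStart χ) T :=
    Set.Icc_subset_Icc R.start_le C.two_mul_le
  have hint := S.integrableOn_weight_mul_sq R.weight_nonneg hε
  have hcmp : (m * (2 * b) - u (2 * b) * v (2 * b)) - (m * b - u b * v b)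
      ≤ ∫ t in b..2 * b, 2 * (scaledWeight χ ε t * u t ^ 2) :=
    sub_le_integral_of_hasDerivAt_le (f := fun t ↦ m * t - u t * v t) hb2
      (fun x hx ↦ by
        have hx0 : 0 ≤ x := hb.le.trans hx.1
        exact ((hasDerivAt_id x).const_mul m).sub
          ((S.hasDerivAt_fst x hx0).mul (S.hasDerivAt_snd x hx0)))
      ((hint.mono_set (Icc_subset_Ioi_zero hb)).const_mul 2) fun x hx ↦ by
        have henergy := S.rpow_mul_exp_div_le_energy R C (Set.Ioo_subset_Icc_self hx)
        linarith [mul_nonneg R.kappa_mul_nonneg (sq_nonneg (u x))]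
  have hle : ∫ t in b..2 * b, 2 * (scaledWeight χ ε t * u t ^ 2)
      ≤ 2 * ∫ t in Set.Ioi 0, scaledWeight χ ε t * u t ^ 2 := by
    rw [intervalIntegral.integral_const_mul, intervalIntegral.integral_of_le hb2]
    gcongr ?_ * ?_
    refine setIntegral_mono_set hint ?_ (Filter.Eventually.of_forall fun t ht ↦ hb.trans ht.1)
    filter_upwards [ae_restrict_mem measurableSet_Ioi] with t ht
    exact mul_nonneg (scaledWeight_nonneg (le_of_lt ht)) (sq_nonneg _)
  have huv_left := abs_le.1 (S.abs_mul_le R C (hsub (Set.left_mem_Icc.2 hb2)))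
  have huv_right := abs_le.1 (S.abs_mul_le R C (hsub (Set.right_mem_Icc.2 hb2)))
  have hm : b ^ (χ / 2) * b * rexp (-2) / wkbConst χ = m * b := by
    simp only [m]
    ring
  linarith

theorem integral_Ioc_start_weight_mul_sq_le (R : IsAsymptoticRegime χ κ ε)
    (S : IsScaledSolution χ κ ε u v) :
    ∫ t in Set.Ioc 0 (wkbStart χ), scaledWeight χ ε t * u t ^ 2
      ≤ 576 * wkbStart χ ^ χ * wkbStart χ := by
  have ha : 0 < wkbStart χ := by linarith [R.four_le_start]
  have hint := S.integrableOn_weight_mul_sq R.weight_nonneg R.pos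
  calc ∫ t in Set.Ioc 0 (wkbStart χ), scaledWeight χ ε t * u t ^ 2
      ≤ ∫ _ in Set.Ioc 0 (wkbStart χ), 576 * wkbStart χ ^ χ := by
        refine setIntegral_mono_on (hint.mono_set Set.Ioc_subset_Ioi_self)
          continuous_const.integrableOn_Ioc measurableSet_Ioc fun t ht ↦ ?_
        have hw : scaledWeight χ ε t ≤ wkbStart χ ^ χ :=
          (scaledWeight_le_rpow R.pos.le ht.1.le).trans
            (rpow_le_rpow ht.1.le ht.2 R.weight_nonneg)
        have hu : u t ^ 2 ≤ 24 ^ 2 :=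
          sq_le_sq' (abs_le.1 (S.abs_le_twenty_four R ht.1.le (ht.2.trans R.start_le))).1
            (abs_le.1 (S.abs_le_twenty_four R ht.1.le (ht.2.trans R.start_le))).2
        calc scaledWeight χ ε t * u t ^ 2 ≤ wkbStart χ ^ χ * 24 ^ 2 := by gcongr
          _ = 576 * wkbStart χ ^ χ := by ring
    _ = 576 * wkbStart χ ^ χ * wkbStart χ := by
        rw [setIntegral_const, volume_real_Ioc_of_le ha.le, smul_eq_mul]
        ring

theorem integral_Ioc_cutoff_weight_mul_sq_le (R : IsAsymptoticRegime χ κ ε)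
    (S : IsScaledSolution χ κ ε u v) (C : IsWKBCutoff χ ε T) :
    ∫ t in Set.Ioc (wkbStart χ) T, scaledWeight χ ε t * u t ^ 2
      ≤ wkbConst χ * ((ε / 2) ^ (-(χ / 2 + 1) / 2) * (1 / 2) * Gamma ((χ / 2 + 1) / 2)) := by
  have hε := R.pos
  have hχ := R.weight_nonneg
  have ha : 0 < wkbStart χ := by linarith [R.four_le_start]
  have hC := one_le_wkbConst hχ
  have hpos : ∀ t ∈ Set.Ioc (wkbStart χ) T, 0 < t := fun t ht ↦ ha.trans ht.1
  have hgamma : IntegrableOn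
      (fun t : ℝ ↦ wkbConst χ * (t ^ (χ / 2) * rexp (-(ε / 2) * t ^ (2 : ℝ)))) (Set.Ioi 0) :=
    (integrableOn_rpow_mul_exp_neg_mul_rpow (by linarith) (by norm_num)
      (by positivity)).const_mul _
  rw [← integral_rpow_mul_exp_neg_mul_rpow (by norm_num) (by linarith) (by positivity),
    ← integral_const_mul]
  calc ∫ t in Set.Ioc (wkbStart χ) T, scaledWeight χ ε t * u t ^ 2
      ≤ ∫ t in Set.Ioc (wkbStart χ) T,
          wkbConst χ * (t ^ (χ / 2) * rexp (-(ε / 2) * t ^ (2 : ℝ))) := by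
        refine setIntegral_mono_on ((S.integrableOn_weight_mul_sq hχ hε).mono_set hpos)
          (hgamma.mono_set hpos) measurableSet_Ioc fun t ht ↦ ?_
        have hh := wkbAmplitude_pos (χ := χ) (ε := ε) (hpos t ht)
        rw [rpow_two, ← inv_wkbAmplitude (hpos t ht), scaledWeight_eq_one_div_sq (hpos t ht)]
        calc 1 / wkbAmplitude χ ε t ^ 2 * u t ^ 2
            ≤ 1 / wkbAmplitude χ ε t ^ 2 * (wkbAmplitude χ ε t * wkbConst χ) := by
              gcongr
              exact (sq_le_mul_wkbEnergy hh).trans (mul_le_mul_of_nonneg_left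
                (S.wkbEnergy_le R C (Set.Ioc_subset_Icc_self ht)) hh.le)
          _ = wkbConst χ * (wkbAmplitude χ ε t)⁻¹ := by field_simp
    _ ≤ ∫ t in Set.Ioi 0, wkbConst χ * (t ^ (χ / 2) * rexp (-(ε / 2) * t ^ (2 : ℝ))) := by
        refine setIntegral_mono_set hgamma ?_ (Filter.Eventually.of_forall hpos)
        filter_upwards [ae_restrict_mem measurableSet_Ioi] with t ht
        have ht0 : 0 < t := ht
        simp only [Pi.zero_apply]
        positivity

end IsScaledSolution

namespace IsWKBCutoff

theorem pos (C : IsWKBCutoff χ ε T) (hε : 0 < ε) : 0 < T :=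
  lt_of_lt_of_le (by positivity) C.two_mul_le

theorem rpow_neg_half_le (C : IsWKBCutoff χ ε T) (hε : 0 < ε) : ε ^ (-(1 / 2) : ℝ) ≤ T := by
  linarith [C.two_mul_le, rpow_pos_of_pos hε (-(1 / 2))]

theorem inv_amplitude_le (C : IsWKBCutoff χ ε T) (hε : 0 < ε) :
    (wkbAmplitude χ ε T)⁻¹ ≤ ε ^ (2 / 5 : ℝ) := by
  rw [inv_le_comm₀ (wkbAmplitude_pos (C.pos hε)) (by positivity), ← rpow_neg hε.le]
  exact C.rpow_le_amplitude

theorem inv_mul_le (C : IsWKBCutoff χ ε T) (hε : 0 < ε) : (ε * T)⁻¹ ≤ ε ^ (-(1 / 2) : ℝ) := by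
  rw [inv_le_iff_one_le_mul₀ (mul_pos hε (C.pos hε))]
  calc (1 : ℝ) = ε ^ (-(1 / 2) : ℝ) * (ε * ε ^ (-(1 / 2) : ℝ)) := by
        rw [mul_left_comm, ← sq, rpow_neg_half_sq hε, mul_inv_cancel₀ hε.ne']
    _ ≤ ε ^ (-(1 / 2) : ℝ) * (ε * T) := by
        gcongr
        exact C.rpow_neg_half_le hε

end IsWKBCutoff

namespace IsScaledSolution

theorem integral_Ioi_cutoff_weight_mul_sq_le (R : IsAsymptoticRegime χ κ ε)
    (S : IsScaledSolution χ κ ε u v) (C : IsWKBCutoff χ ε T) :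
    ∫ t in Set.Ioi T, scaledWeight χ ε t * u t ^ 2 ≤ wkbConst χ * ε ^ (-(1 / 10) : ℝ) := by
  have hε := R.pos
  have hT := C.pos hε
  have hC := one_le_wkbConst R.weight_nonneg
  have hh := wkbAmplitude_pos (χ := χ) (ε := ε) hT
  calc ∫ t in Set.Ioi T, scaledWeight χ ε t * u t ^ 2
      ≤ (v T ^ 2 + scaledWeight χ ε T * u T ^ 2) / (ε * T) :=
        S.integral_Ioi_weight_mul_sq_le R hT C.weight_le_mul_sq
    _ = wkbEnergy (wkbAmplitude χ ε) u v T * ((wkbAmplitude χ ε T)⁻¹ * (ε * T)⁻¹) := by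
        rw [wkbEnergy_wkbAmplitude hT]
        field_simp
    _ ≤ wkbConst χ * (ε ^ (2 / 5 : ℝ) * ε ^ (-(1 / 2) : ℝ)) := by
        gcongr
        · exact S.wkbEnergy_le R C ⟨R.start_le_cutoff C, le_rfl⟩
        · exact C.inv_amplitude_le hε
        · exact C.inv_mul_le hε
    _ = wkbConst χ * ε ^ (-(1 / 10) : ℝ) := by
        rw [← rpow_add hε]
        norm_num

theorem integral_weight_mul_sq_le (R : IsAsymptoticRegime χ κ ε)
    (S : IsScaledSolution χ κ ε u v) (C : IsWKBCutoff χ ε T) :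
    ∫ t in Set.Ioi 0, scaledWeight χ ε t * u t ^ 2
      ≤ 576 * wkbStart χ ^ χ * wkbStart χ
        + wkbConst χ * ((ε / 2) ^ (-(χ / 2 + 1) / 2) * (1 / 2) * Gamma ((χ / 2 + 1) / 2))
        + wkbConst χ * ε ^ (-(1 / 10) : ℝ) := by
  have ha : 0 < wkbStart χ := by linarith [R.four_le_start]
  have hint := S.integrableOn_weight_mul_sq R.weight_nonneg R.pos
  rw [← Set.Ioc_union_Ioi_eq_Ioi (ha.le.trans (R.start_le_cutoff C)), setIntegral_union
      Set.Ioc_disjoint_Ioi_same measurableSet_Ioi (hint.mono_set Set.Ioc_subset_Ioi_self)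
      (hint.mono_set (Set.Ioi_subset_Ioi (C.pos R.pos).le)),
    ← Set.Ioc_union_Ioc_eq_Ioc ha.le (R.start_le_cutoff C), setIntegral_union
      (Set.Ioc_disjoint_Ioc_of_le le_rfl) measurableSet_Ioc
      (hint.mono_set Set.Ioc_subset_Ioi_self) (hint.mono_set fun t ht ↦ ha.trans ht.1)]
  exact add_le_add (add_le_add (S.integral_Ioc_start_weight_mul_sq_le R)
    (S.integral_Ioc_cutoff_weight_mul_sq_le R C)) (S.integral_Ioi_cutoff_weight_mul_sq_le R C)

theorem le_rpow_mul_integral_weight_mul_sq (R : IsAsymptoticRegime χ κ ε)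
    (S : IsScaledSolution χ κ ε u v) (C : IsWKBCutoff χ ε T)
    (hsmall : 2 * wkbConst χ ^ 2 * rexp 2 * ε ^ ((χ + 2) / 4) ≤ 1) :
    rexp (-2) / wkbConst χ / 4
      ≤ ε ^ ((χ + 2) / 4) * ∫ t in Set.Ioi 0, scaledWeight χ ε t * u t ^ 2 := by
  have hW := one_le_wkbConst R.weight_nonneg
  have hε := R.pos
  have hlow := mul_le_mul_of_nonneg_left (S.le_two_mul_integral_weight_mul_sq R C)
    (rpow_nonneg hε.le ((χ + 2) / 4))
  have herr : ε ^ ((χ + 2) / 4) * wkbConst χ ≤ rexp (-2) / wkbConst χ / 2 := by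
    rw [exp_neg, div_div, le_div_iff₀ (by positivity), ← one_div, le_div_iff₀ (exp_pos 2)]
    linarith
  have hmain : ε ^ ((χ + 2) / 4) * (ε ^ (-((χ + 2) / 4)) * rexp (-2) / wkbConst χ)
      = rexp (-2) / wkbConst χ := by
    rw [mul_div_assoc, ← mul_assoc, ← rpow_add hε, add_neg_cancel, rpow_zero, one_mul]
  linarith

theorem rpow_mul_integral_weight_mul_sq_le (R : IsAsymptoticRegime χ κ ε)
    (S : IsScaledSolution χ κ ε u v) (C : IsWKBCutoff χ ε T) :
    ε ^ ((χ + 2) / 4) * ∫ t in Set.Ioi 0, scaledWeight χ ε t * u t ^ 2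
      ≤ 576 * wkbStart χ ^ χ * wkbStart χ
        + wkbConst χ * (2 ^ ((χ + 2) / 4) * (1 / 2) * Gamma ((χ / 2 + 1) / 2)) + wkbConst χ := by
  have hχ := R.weight_nonneg
  have hε := R.pos
  have hW := one_le_wkbConst hχ
  have ha : 0 < wkbStart χ := by linarith [R.four_le_start]
  have hle1 : ε ^ ((χ + 2) / 4) ≤ 1 := rpow_le_one hε.le R.le_one (by positivity)
  have hgamma : ε ^ ((χ + 2) / 4) * (ε / 2) ^ (-(χ / 2 + 1) / 2) = 2 ^ ((χ + 2) / 4) := by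
    rw [show -(χ / 2 + 1) / 2 = -((χ + 2) / 4) by ring, div_rpow hε.le zero_le_two,
      ← mul_div_assoc, ← rpow_add hε, add_neg_cancel, rpow_zero, rpow_neg zero_le_two, one_div,
      inv_inv]
  have htail : ε ^ ((χ + 2) / 4) * ε ^ (-(1 / 10) : ℝ) ≤ 1 := by
    rw [← rpow_add hε]
    exact rpow_le_one hε.le R.le_one (by linarith)
  calc ε ^ ((χ + 2) / 4) * ∫ t in Set.Ioi 0, scaledWeight χ ε t * u t ^ 2 ≤ _ :=
        mul_le_mul_of_nonneg_left (S.integral_weight_mul_sq_le R C) (rpow_nonneg hε.le _)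
    _ = ε ^ ((χ + 2) / 4) * (576 * wkbStart χ ^ χ * wkbStart χ)
        + wkbConst χ * (ε ^ ((χ + 2) / 4) * (ε / 2) ^ (-(χ / 2 + 1) / 2) * (1 / 2)
          * Gamma ((χ / 2 + 1) / 2))
        + wkbConst χ * (ε ^ ((χ + 2) / 4) * ε ^ (-(1 / 10) : ℝ)) := by ring
    _ ≤ _ := by
      rw [hgamma]
      exact add_le_add (add_le_add (mul_le_of_le_one_left (by positivity) hle1) le_rfl)
        (mul_le_of_le_one_right (by positivity) htail)

theorem eventually_integral_weight_mul_sq_bounds (hχ : 0 ≤ χ) (hκ : 0 ≤ κ) :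
    ∃ c C : ℝ, 0 < c ∧ 0 < C ∧ ∀ᶠ ε : ℝ in 𝓝[>] 0, ∀ u v, IsScaledSolution χ κ ε u v →
      c ≤ ε ^ ((χ + 2) / 4) * ∫ t in Set.Ioi 0, scaledWeight χ ε t * u t ^ 2 ∧
      ε ^ ((χ + 2) / 4) * ∫ t in Set.Ioi 0, scaledWeight χ ε t * u t ^ 2 ≤ C := by
  have hW := one_le_wkbConst hχ
  have ha : 0 < wkbStart χ := by
    unfold wkbStart
    positivity
  have : 0 < Gamma ((χ / 2 + 1) / 2) := Gamma_pos_of_pos (by positivity)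
  refine ⟨rexp (-2) / wkbConst χ / 4, 576 * wkbStart χ ^ χ * wkbStart χ
    + wkbConst χ * (2 ^ ((χ + 2) / 4) * (1 / 2) * Gamma ((χ / 2 + 1) / 2)) + wkbConst χ,
    by positivity, by positivity, ?_⟩
  filter_upwards [eventually_isAsymptoticRegime hχ hκ, eventually_exists_isWKBCutoff hχ,
    eventually_const_mul_rpow_le_one (2 * wkbConst χ ^ 2 * rexp 2)
      (show 0 < (χ + 2) / 4 by positivity)] with ε R ⟨T, C⟩ hsmall u v S
  exact ⟨S.le_rpow_mul_integral_weight_mul_sq R C hsmall,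
    S.rpow_mul_integral_weight_mul_sq_le R C⟩

end IsScaledSolution

end Norm

/-! ### The pairing with the target -/

section Pairing

variable {χ κ ε ξ T x₁ t : ℝ} {u v : ℝ → ℝ}

/-- The approximate primitive `-t ^ (-ξ) v - ξ t ^ (-ξ - 1) u` of `t ^ (-ξ) w u` along a solution of
`u' = v`, `v' = -(w - κ ε) u`, obtained by integrating by parts twice. -/
noncomputable def pairingPrimitive (ξ : ℝ) (u v : ℝ → ℝ) (t : ℝ) : ℝ :=
  -(t ^ (-ξ) * v t) - ξ * (t ^ (-ξ - 1) * u t)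

theorem rpow_neg_sub_two (ht : 0 < t) : t ^ (-ξ - 2) = t ^ (-ξ) * (t ^ 2)⁻¹ := by
  rw [rpow_sub ht, rpow_two, div_eq_mul_inv]

theorem rpow_neg_le_one (hξ : 0 ≤ ξ) (ht : 1 ≤ t) : t ^ (-ξ) ≤ 1 :=
  rpow_le_one_of_one_le_of_nonpos ht (neg_nonpos.2 hξ)

namespace IsScaledSolution

theorem hasDerivAt_pairingPrimitive (S : IsScaledSolution χ κ ε u v) (ht : 0 < t) :
    HasDerivAt (pairingPrimitive ξ u v) (t ^ (-ξ) * scaledWeight χ ε t * u t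
      - (κ * ε * t ^ (-ξ) - ξ * (ξ + 1) * t ^ (-ξ - 2)) * u t) t := by
  have hrpow (r : ℝ) : HasDerivAt (fun t : ℝ ↦ t ^ r) (r * t ^ (r - 1)) t :=
    hasDerivAt_rpow_const (Or.inl ht.ne')
  refine (((hrpow (-ξ)).fun_mul (S.hasDerivAt_snd t ht.le)).fun_neg.fun_sub
    (((hrpow (-ξ - 1)).fun_mul (S.hasDerivAt_fst t ht.le)).const_mul ξ)).congr_deriv ?_
  rw [show -ξ - 1 - 1 = -ξ - 2 by ring]
  ring

theorem abs_integrand_sub_deriv_pairingPrimitive_le (R : IsAsymptoticRegime χ κ ε) (hξ : 0 ≤ ξ)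
    (ht : 1 ≤ t) :
    |t ^ (-ξ) * scaledWeight χ ε t * u t - (t ^ (-ξ) * scaledWeight χ ε t * u t
      - (κ * ε * t ^ (-ξ) - ξ * (ξ + 1) * t ^ (-ξ - 2)) * u t)|
      ≤ (κ * ε + ξ * (ξ + 1) * t ^ (-ξ - 2)) * |u t| := by
  have hκε := R.kappa_mul_nonneg
  have : 0 < t := by linarith
  rw [sub_sub_cancel, abs_mul]
  gcongr
  calc |κ * ε * t ^ (-ξ) - ξ * (ξ + 1) * t ^ (-ξ - 2)|
      ≤ |κ * ε * t ^ (-ξ)| + |ξ * (ξ + 1) * t ^ (-ξ - 2)| := abs_sub _ _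
    _ = κ * ε * t ^ (-ξ) + ξ * (ξ + 1) * t ^ (-ξ - 2) := by
        rw [abs_of_nonneg (by positivity), abs_of_nonneg (by positivity)]
    _ ≤ κ * ε + ξ * (ξ + 1) * t ^ (-ξ - 2) :=
        add_le_add_left (mul_le_of_le_one_right hκε (rpow_neg_le_one hξ ht)) _

theorem integrableOn_Icc_zero_pairing (S : IsScaledSolution χ κ ε u v) (hε : 0 < ε)
    (hξχ : ξ < χ + 1) :
    IntegrableOn (fun t ↦ t ^ (-ξ) * scaledWeight χ ε t * u t) (Set.Icc 0 x₁) := by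
  rw [integrableOn_Icc_iff_integrableOn_Ioc]
  exact (S.integrableOn_rpow_mul_weight_mul hε (by linarith)).mono_set Set.Ioc_subset_Ioi_self

/- Up to the turning point `u ≥ 0` and `t ^ (-ξ) ≥ 4 ^ (-ξ)`, while `∫ w u ≥ v 0 - v x₁ = 1`. -/
theorem rpow_neg_le_integral_turningPoint (R : IsAsymptoticRegime χ κ ε)
    (S : IsScaledSolution χ κ ε u v) (X : IsFirstTurningPoint u v x₁) (hξ : 0 ≤ ξ)
    (hξχ : ξ < χ + 1) :
    (4 : ℝ) ^ (-ξ) ≤ ∫ t in 0..x₁, t ^ (-ξ) * scaledWeight χ ε t * u t := by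
  have hcmp := sub_le_integral_of_hasDerivAt_le (f := fun t ↦ -((4 : ℝ) ^ (-ξ) * v t))
    (zero_le_one.trans X.one_le)
    (fun x hx ↦ ((S.hasDerivAt_snd x hx.1).const_mul _).fun_neg)
    (S.integrableOn_Icc_zero_pairing R.pos hξχ) fun x hx ↦ by
      have hu := X.nonneg x (Set.Ioo_subset_Icc_self hx)
      have hw := scaledWeight_nonneg (χ := χ) (ε := ε) hx.1.le
      have hκε := R.kappa_mul_nonneg
      have hx4 : (4 : ℝ) ^ (-ξ) ≤ x ^ (-ξ) :=
        rpow_le_rpow_of_nonpos hx.1 (hx.2.le.trans X.le_four) (neg_nonpos.2 hξ)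
      calc -((4 : ℝ) ^ (-ξ) * -((scaledWeight χ ε x - κ * ε) * u x))
          = 4 ^ (-ξ) * (scaledWeight χ ε x * u x) - 4 ^ (-ξ) * (κ * ε * u x) := by ring
        _ ≤ 4 ^ (-ξ) * (scaledWeight χ ε x * u x) := sub_le_self _ (by positivity)
        _ ≤ x ^ (-ξ) * (scaledWeight χ ε x * u x) := by gcongr
        _ = x ^ (-ξ) * scaledWeight χ ε x * u x := by ring
  simpa only [X.deriv_eq_zero, S.snd_zero, mul_zero, mul_one, neg_zero, sub_neg_eq_add,
    zero_add] using hcmp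

theorem integral_turningPoint_le (R : IsAsymptoticRegime χ κ ε)
    (S : IsScaledSolution χ κ ε u v) (X : IsFirstTurningPoint u v x₁) (hξχ : ξ < χ + 1) :
    ∫ t in 0..x₁, t ^ (-ξ) * scaledWeight χ ε t * u t ≤ 8 * (4 : ℝ) ^ (χ + 1 - ξ) := by
  have hcmp := integral_le_sub_of_le_hasDerivAt (f := fun t ↦ 2 * (4 : ℝ) ^ (χ + 1 - ξ) * t)
    (zero_le_one.trans X.one_le) (fun x _ ↦ (hasDerivAt_id x).const_mul _)
    (S.integrableOn_Icc_zero_pairing R.pos hξχ) fun x hx ↦ by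
      have hx0 : 0 < x := hx.1
      calc x ^ (-ξ) * scaledWeight χ ε x * u x ≤ x ^ (-ξ) * x ^ χ * (2 * x) := by
            gcongr
            · exact X.nonneg x (Set.Ioo_subset_Icc_self hx)
            · exact scaledWeight_le_rpow R.pos.le hx0.le
            · exact X.le_two_mul x (Set.Ioo_subset_Icc_self hx)
        _ = 2 * x ^ (χ + 1 - ξ) := by
            rw [show χ + 1 - ξ = -ξ + χ + 1 by ring, rpow_add hx0, rpow_add hx0, rpow_one]
            ring
        _ ≤ 2 * 4 ^ (χ + 1 - ξ) * 1 := by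
            rw [mul_one]
            gcongr
            exact hx.2.le.trans X.le_four
  calc _ ≤ 2 * (4 : ℝ) ^ (χ + 1 - ξ) * x₁ - 2 * 4 ^ (χ + 1 - ξ) * 0 := hcmp
    _ ≤ 2 * (4 : ℝ) ^ (χ + 1 - ξ) * 4 - 2 * 4 ^ (χ + 1 - ξ) * 0 := by
        gcongr
        exact X.le_four
    _ = 8 * (4 : ℝ) ^ (χ + 1 - ξ) := by ring

theorem remainder_mul_abs_le (R : IsAsymptoticRegime χ κ ε) (S : IsScaledSolution χ κ ε u v)
    (X : IsFirstTurningPoint u v x₁) (hξ : 0 ≤ ξ) (ht : t ∈ Set.Icc x₁ (ε ^ (-(1 / 2) : ℝ))) :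
    (κ * ε + ξ * (ξ + 1) * t ^ (-ξ - 2)) * |u t|
      ≤ u x₁ * ξ * ((ξ + 1) * t ^ (-ξ - 2)) + (24 * κ + 16 * ξ * (ξ + 1)) * ε := by
  have hκ := R.kappa_nonneg
  have hε := R.pos
  have ht1 : 1 ≤ t := X.one_le.trans ht.1
  have ht0 : 0 < t := by linarith
  have hu : |u t| ≤ u x₁ * (1 + 2 * (ε * t ^ 2)) := S.abs_le_mul_one_add R X ht
  have hu24 : |u t| ≤ 24 := S.abs_le_twenty_four R ht0.le ht.2
  have : 0 ≤ u x₁ := X.nonneg x₁ ⟨zero_le_one.trans X.one_le, le_rfl⟩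
  calc (κ * ε + ξ * (ξ + 1) * t ^ (-ξ - 2)) * |u t|
      = κ * ε * |u t| + ξ * (ξ + 1) * t ^ (-ξ - 2) * |u t| := by ring
    _ ≤ κ * ε * 24 + ξ * (ξ + 1) * t ^ (-ξ - 2) * (u x₁ * (1 + 2 * (ε * t ^ 2))) := by gcongr
    _ = u x₁ * ξ * ((ξ + 1) * t ^ (-ξ - 2)) + 24 * κ * ε
        + 2 * ξ * (ξ + 1) * ε * (u x₁ * t ^ (-ξ)) := by
        rw [rpow_neg_sub_two ht0]
        field_simp
        ring
    _ ≤ u x₁ * ξ * ((ξ + 1) * t ^ (-ξ - 2)) + 24 * κ * ε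
        + 2 * ξ * (ξ + 1) * ε * (8 * 1) := by
        gcongr
        · exact X.le_eight
        · exact rpow_neg_le_one hξ ht1
    _ = u x₁ * ξ * ((ξ + 1) * t ^ (-ξ - 2)) + (24 * κ + 16 * ξ * (ξ + 1)) * ε := by ring

/- The main part of the remainder integrates to exactly the boundary term of `pairingPrimitive` at
the turning point, so the lower bound loses nothing of order one. -/
theorem integral_middle_bounds (R : IsAsymptoticRegime χ κ ε) (S : IsScaledSolution χ κ ε u v)
    (X : IsFirstTurningPoint u v x₁) (hξ : 0 ≤ ξ) (hξχ : ξ < χ + 1) :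
    pairingPrimitive ξ u v (ε ^ (-(1 / 2) : ℝ)) - (24 * κ + 16 * ξ * (ξ + 1)) * ε ^ (1 / 2 : ℝ)
      ≤ ∫ t in x₁..(ε ^ (-(1 / 2) : ℝ)), t ^ (-ξ) * scaledWeight χ ε t * u t ∧
    ∫ t in x₁..(ε ^ (-(1 / 2) : ℝ)), t ^ (-ξ) * scaledWeight χ ε t * u t
      ≤ pairingPrimitive ξ u v (ε ^ (-(1 / 2) : ℝ))
        + (24 * κ + 16 * ξ * (ξ + 1)) * ε ^ (1 / 2 : ℝ) + 16 * ξ := by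
  have hκ := R.kappa_nonneg
  have hε := R.pos
  have hεb : ε ^ (1 / 2 : ℝ) = ε * ε ^ (-(1 / 2) : ℝ) := by
    rw [← rpow_one_add' hε.le (by norm_num)]
    norm_num
  have hxb : x₁ ≤ ε ^ (-(1 / 2) : ℝ) := X.le_four.trans (R.four_le_start.trans R.start_le)
  have hx0 : 0 < x₁ := by linarith [X.one_le]
  have hux : 0 ≤ u x₁ := X.nonneg x₁ ⟨hx0.le, le_rfl⟩
  rw [hεb]
  set b : ℝ := ε ^ (-(1 / 2) : ℝ)
  have : 0 < b := hx0.trans_le hxb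
  have hcmp := abs_le.1 (abs_integral_sub_le_of_hasDerivAt hxb
    (fun t ht ↦ S.hasDerivAt_pairingPrimitive (ξ := ξ) (hx0.trans_le ht.1))
    (fun t ht ↦ (((hasDerivAt_rpow_const (p := -ξ - 1)
      (Or.inl (hx0.trans_le ht.1).ne')).const_mul (-(u x₁ * ξ))).fun_add
      ((hasDerivAt_id t).const_mul ((24 * κ + 16 * ξ * (ξ + 1)) * ε))))
    ((S.integrableOn_rpow_mul_weight_mul hε (r := -ξ) (by linarith)).mono_set
      (Icc_subset_Ioi_zero hx0))
    fun t ht ↦ (abs_integrand_sub_deriv_pairingPrimitive_le R hξ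
      (X.one_le.trans ht.1.le)).trans ((S.remainder_mul_abs_le R X hξ
        (Set.Ioo_subset_Icc_self ht)).trans_eq (by rw [show -ξ - 1 - 1 = -ξ - 2 by ring]; ring)))
  have hprim : pairingPrimitive ξ u v x₁ = -(u x₁ * ξ * x₁ ^ (-ξ - 1)) := by
    rw [pairingPrimitive, X.deriv_eq_zero]
    ring
  have hboundary : u x₁ * ξ * x₁ ^ (-ξ - 1) ≤ 8 * ξ * 1 := by
    gcongr
    · exact X.le_eight
    · exact rpow_le_one_of_one_le_of_nonpos X.one_le (by linarith)
  have hb_nonneg : 0 ≤ u x₁ * ξ * b ^ (-ξ - 1) := by positivity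
  have hx_nonneg : 0 ≤ (24 * κ + 16 * ξ * (ξ + 1)) * ε * x₁ := by positivity
  simp only [id, hprim] at hcmp
  constructor <;> linarith [hcmp.1, hcmp.2]

theorem abs_le_on_cutoff (R : IsAsymptoticRegime χ κ ε) (S : IsScaledSolution χ κ ε u v)
    (C : IsWKBCutoff χ ε T) (ht : t ∈ Set.Icc (wkbStart χ) T) :
    |u t| ≤ wkbConst χ * ε ^ (-(5 / 24) : ℝ) := by
  have hε := R.pos
  have hW := one_le_wkbConst R.weight_nonneg
  have hh := wkbAmplitude_pos (χ := χ) (ε := ε) (t := t) (by linarith [R.four_le_start, ht.1])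
  refine abs_le_of_sq_le_sq ?_ (by positivity)
  calc u t ^ 2 ≤ wkbAmplitude χ ε t * wkbEnergy (wkbAmplitude χ ε) u v t :=
        sq_le_mul_wkbEnergy hh
    _ ≤ ε ^ (-(5 / 12) : ℝ) * wkbConst χ ^ 2 := by
        gcongr
        · exact wkbEnergy_nonneg hh
        · exact R.wkbAmplitude_le_rpow C ht
        · exact (S.wkbEnergy_le R C ht).trans (le_self_pow₀ hW two_ne_zero)
    _ = (wkbConst χ * ε ^ (-(5 / 24) : ℝ)) ^ 2 := by
        rw [mul_pow, ← rpow_natCast (ε ^ _), ← rpow_mul hε.le]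
        norm_num
        ring

theorem abs_deriv_cutoff_le (R : IsAsymptoticRegime χ κ ε) (S : IsScaledSolution χ κ ε u v)
    (C : IsWKBCutoff χ ε T) : |v T| ≤ wkbConst χ * ε ^ (1 / 5 : ℝ) := by
  have hε := R.pos
  have hW := one_le_wkbConst R.weight_nonneg
  have hh := wkbAmplitude_pos (χ := χ) (ε := ε) (C.pos hε)
  refine abs_le_of_sq_le_sq ?_ (by positivity)
  calc v T ^ 2 = wkbAmplitude χ ε T * v T ^ 2 * (wkbAmplitude χ ε T)⁻¹ := by field_simp
    _ ≤ wkbConst χ ^ 2 * ε ^ (2 / 5 : ℝ) := by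
        gcongr
        · exact (mul_deriv_sq_le_wkbEnergy hh).trans ((S.wkbEnergy_le R C
            ⟨R.start_le_cutoff C, le_rfl⟩).trans (le_self_pow₀ hW two_ne_zero))
        · exact C.inv_amplitude_le hε
    _ = (wkbConst χ * ε ^ (1 / 5 : ℝ)) ^ 2 := by
        rw [mul_pow, ← rpow_natCast (ε ^ _), ← rpow_mul hε.le]
        norm_num

theorem abs_pairingPrimitive_cutoff_le (R : IsAsymptoticRegime χ κ ε)
    (S : IsScaledSolution χ κ ε u v) (C : IsWKBCutoff χ ε T) (hξ : 0 ≤ ξ) :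
    |pairingPrimitive ξ u v T| ≤ (ξ + 1) * wkbConst χ * ε ^ (1 / 10 : ℝ) := by
  have hε := R.pos
  have hW := one_le_wkbConst R.weight_nonneg
  have hpow {r : ℝ} (hr : 1 / 10 ≤ r) : ε ^ r ≤ ε ^ (1 / 10 : ℝ) :=
    rpow_le_rpow_of_exponent_ge hε R.le_one hr
  have hT0 := C.pos hε
  have hbT := C.rpow_neg_half_le hε
  have hT1 : 1 ≤ T := by linarith [R.four_le_start, R.start_le_cutoff C]
  have hTinv : T ^ (-ξ - 1) ≤ ε ^ (1 / 2 : ℝ) := by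
    rw [rpow_sub_one hT0.ne', div_eq_mul_inv]
    refine (mul_le_of_le_one_left (by positivity) (rpow_neg_le_one hξ hT1)).trans ?_
    rwa [inv_le_comm₀ hT0 (by positivity), ← rpow_neg hε.le]
  have hderiv : T ^ (-ξ) * |v T| ≤ 1 * (wkbConst χ * ε ^ (1 / 10 : ℝ)) := by
    gcongr
    · exact rpow_neg_le_one hξ hT1
    · exact (S.abs_deriv_cutoff_le R C).trans
        (mul_le_mul_of_nonneg_left (hpow (by norm_num)) (by positivity))
  have hvalue : T ^ (-ξ - 1) * |u T| ≤ wkbConst χ * ε ^ (1 / 10 : ℝ) :=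
    calc T ^ (-ξ - 1) * |u T| ≤ ε ^ (1 / 2 : ℝ) * (wkbConst χ * ε ^ (-(5 / 24) : ℝ)) := by
          gcongr
          exact S.abs_le_on_cutoff R C ⟨R.start_le_cutoff C, le_rfl⟩
      _ = wkbConst χ * ε ^ (1 / 2 + -(5 / 24) : ℝ) := by
          rw [rpow_add hε]
          ring
      _ ≤ wkbConst χ * ε ^ (1 / 10 : ℝ) := by
          exact mul_le_mul_of_nonneg_left (hpow (by norm_num)) (by positivity)
  calc |pairingPrimitive ξ u v T| ≤ |-(T ^ (-ξ) * v T)| + |ξ * (T ^ (-ξ - 1) * u T)| :=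
        abs_sub _ _
    _ = T ^ (-ξ) * |v T| + ξ * (T ^ (-ξ - 1) * |u T|) := by
        rw [abs_neg, abs_mul, abs_mul, abs_mul, abs_of_nonneg hξ,
          abs_of_pos (rpow_pos_of_pos hT0 (-ξ)), abs_of_pos (rpow_pos_of_pos hT0 (-ξ - 1))]
    _ ≤ 1 * (wkbConst χ * ε ^ (1 / 10 : ℝ)) + ξ * (wkbConst χ * ε ^ (1 / 10 : ℝ)) := by gcongr
    _ = (ξ + 1) * wkbConst χ * ε ^ (1 / 10 : ℝ) := by ring

theorem pairing_remainder_le_on_outer (S : IsScaledSolution χ κ ε u v)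
    (R : IsAsymptoticRegime χ κ ε) (C : IsWKBCutoff χ ε T) (hξ : 0 ≤ ξ)
    (ht : t ∈ Set.Icc (ε ^ (-(1 / 2) : ℝ)) T) :
    (κ * ε + ξ * (ξ + 1) * t ^ (-ξ - 2)) * |u t|
      ≤ (κ * ε + ξ * (ξ + 1) * ε) * (wkbConst χ * ε ^ (-(5 / 24) : ℝ)) := by
  have hκ := R.kappa_nonneg
  have hε := R.pos
  have hb0 : 0 < ε ^ (-(1 / 2) : ℝ) := by positivity
  have hstart := R.start_le
  have ht0 : 0 < t := hb0.trans_le ht.1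
  have ht1 : 1 ≤ t := by linarith [R.four_le_start, ht.1]
  gcongr
  · rw [rpow_neg_sub_two ht0]
    refine (mul_le_of_le_one_left (by positivity) (rpow_neg_le_one hξ ht1)).trans ?_
    rw [inv_le_comm₀ (by positivity) hε, ← rpow_neg_half_sq hε]
    exact pow_le_pow_left₀ hb0.le ht.1 2
  · exact S.abs_le_on_cutoff R C ⟨hstart.trans ht.1, ht.2⟩

theorem abs_integral_outer_add_le (R : IsAsymptoticRegime χ κ ε)
    (S : IsScaledSolution χ κ ε u v) (C : IsWKBCutoff χ ε T) (hξ : 0 ≤ ξ) (hξχ : ξ < χ + 1) :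
    |(∫ t in (ε ^ (-(1 / 2) : ℝ))..T, t ^ (-ξ) * scaledWeight χ ε t * u t)
      - (pairingPrimitive ξ u v T - pairingPrimitive ξ u v (ε ^ (-(1 / 2) : ℝ)))|
      ≤ (κ + ξ * (ξ + 1)) * wkbConst χ * ε ^ (1 / 10 : ℝ) := by
  have hκ := R.kappa_nonneg
  have hε := R.pos
  have hW := one_le_wkbConst R.weight_nonneg
  have hbT := C.rpow_neg_half_le hε
  have hb0 : 0 < ε ^ (-(1 / 2) : ℝ) := by positivity
  set b : ℝ := ε ^ (-(1 / 2) : ℝ)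
  set M : ℝ := wkbConst χ * ε ^ (-(5 / 24) : ℝ) with hM
  have hcmp := abs_integral_sub_le_of_hasDerivAt hbT
    (fun t ht ↦ S.hasDerivAt_pairingPrimitive (ξ := ξ) (hb0.trans_le ht.1))
    (fun t _ ↦ (hasDerivAt_id t).const_mul ((κ * ε + ξ * (ξ + 1) * ε) * M))
    ((S.integrableOn_rpow_mul_weight_mul hε (r := -ξ) (by linarith)).mono_set
      (Icc_subset_Ioi_zero hb0))
    fun t ht ↦ by
      rw [mul_one]
      exact (abs_integrand_sub_deriv_pairingPrimitive_le R hξ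
        (by linarith [R.four_le_start, R.start_le, ht.1])).trans
        (S.pairing_remainder_le_on_outer R C hξ (Set.Ioo_subset_Icc_self ht))
  refine hcmp.trans ?_
  calc (κ * ε + ξ * (ξ + 1) * ε) * M * T - (κ * ε + ξ * (ξ + 1) * ε) * M * b
      ≤ (κ * ε + ξ * (ξ + 1) * ε) * M * T := sub_le_self _ (by positivity)
    _ ≤ (κ * ε + ξ * (ξ + 1) * ε) * M * ε ^ (-(11 / 20) : ℝ) := by
        gcongr
        exact C.le_rpow
    _ = (κ + ξ * (ξ + 1)) * wkbConst χ * ε ^ (1 + -(5 / 24) + -(11 / 20) : ℝ) := by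
        rw [hM, rpow_add hε, rpow_add hε, rpow_one]
        ring
    _ ≤ (κ + ξ * (ξ + 1)) * wkbConst χ * ε ^ (1 / 10 : ℝ) := by
        exact mul_le_mul_of_nonneg_left
          (rpow_le_rpow_of_exponent_ge hε R.le_one (by norm_num)) (by positivity)

end IsScaledSolution

theorem IsWKBCutoff.integral_Ioi_scaledWeight_le (C : IsWKBCutoff χ ε T) (hχ : 0 ≤ χ)
    (hε : 0 < ε) : ∫ t in Set.Ioi T, scaledWeight χ ε t ≤ ε ^ (3 / 10 : ℝ) := by
  have hT := C.pos hε
  have hh := wkbAmplitude_pos (χ := χ) (ε := ε) hT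
  calc ∫ t in Set.Ioi T, scaledWeight χ ε t ≤ scaledWeight χ ε T / (ε * T) :=
        _root_.integral_Ioi_scaledWeight_le hχ hε hT C.weight_le_mul_sq
    _ = (wkbAmplitude χ ε T)⁻¹ ^ 2 * (ε * T)⁻¹ := by
        rw [scaledWeight_eq_one_div_sq hT, one_div, inv_pow, div_eq_mul_inv]
    _ ≤ (ε ^ (2 / 5 : ℝ)) ^ 2 * ε ^ (-(1 / 2) : ℝ) := by
        gcongr
        · exact C.inv_amplitude_le hε
        · exact C.inv_mul_le hε
    _ = ε ^ (3 / 10 : ℝ) := by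
        rw [← rpow_natCast (ε ^ _), ← rpow_mul hε.le, ← rpow_add hε]
        norm_num

theorem abs_le_inv_add_mul_sq {γ : ℝ} (hγ : 0 < γ) (x : ℝ) :
    |x| ≤ 1 / (2 * γ) + γ / 2 * x ^ 2 := by
  have hsq : 0 ≤ (γ * |x| - 1) ^ 2 / (2 * γ) := by positivity
  have hexpand : (γ * |x| - 1) ^ 2 / (2 * γ) = 1 / (2 * γ) + γ / 2 * x ^ 2 - |x| := by
    rw [← sq_abs x]
    field_simp
    ring
  linarith

namespace IsScaledSolution

theorem abs_integral_Ioi_pairing_le {γ : ℝ} (S : IsScaledSolution χ κ ε u v) (hχ : 0 ≤ χ)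
    (hε : 0 < ε) (hξ : 0 ≤ ξ) (hξχ : ξ < χ + 1) (hT : 1 ≤ T) (hγ : 0 < γ) :
    |∫ t in Set.Ioi T, t ^ (-ξ) * scaledWeight χ ε t * u t|
      ≤ 1 / (2 * γ) * (∫ t in Set.Ioi T, scaledWeight χ ε t)
        + γ / 2 * ∫ t in Set.Ioi T, scaledWeight χ ε t * u t ^ 2 := by
  have hsub : Set.Ioi T ⊆ Set.Ioi 0 := Set.Ioi_subset_Ioi (by linarith)
  have hw := (integrableOn_scaledWeight hχ hε).mono_set hsub
  have hwu := (S.integrableOn_weight_mul_sq hχ hε).mono_set hsub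
  rw [← integral_const_mul, ← integral_const_mul,
    ← integral_add (hw.const_mul _) (hwu.const_mul _)]
  refine abs_integral_le_integral_abs.trans (setIntegral_mono_on
    ((S.integrableOn_rpow_mul_weight_mul hε (by linarith)).mono_set hsub).abs
    ((hw.const_mul _).add (hwu.const_mul _)) measurableSet_Ioi fun t ht ↦ ?_)
  have ht1 : 1 ≤ t := hT.trans (le_of_lt ht)
  have ht0 : 0 < t := by linarith
  have hw0 := scaledWeight_nonneg (χ := χ) (ε := ε) ht0.le
  calc |t ^ (-ξ) * scaledWeight χ ε t * u t| = t ^ (-ξ) * scaledWeight χ ε t * |u t| := by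
        rw [abs_mul, abs_of_nonneg (by positivity)]
    _ ≤ 1 * scaledWeight χ ε t * (1 / (2 * γ) + γ / 2 * u t ^ 2) := by
        gcongr
        · exact rpow_neg_le_one hξ ht1
        · exact abs_le_inv_add_mul_sq hγ _
    _ = 1 / (2 * γ) * scaledWeight χ ε t + γ / 2 * (scaledWeight χ ε t * u t ^ 2) := by ring

theorem abs_integral_Ioi_cutoff_pairing_le (R : IsAsymptoticRegime χ κ ε)
    (S : IsScaledSolution χ κ ε u v) (C : IsWKBCutoff χ ε T) (hξ : 0 ≤ ξ) (hξχ : ξ < χ + 1) :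
    |∫ t in Set.Ioi T, t ^ (-ξ) * scaledWeight χ ε t * u t|
      ≤ wkbConst χ * ε ^ (1 / 10 : ℝ) := by
  have hχ := R.weight_nonneg
  have hε := R.pos
  have hW := one_le_wkbConst hχ
  have hT1 : 1 ≤ T := by linarith [R.four_le_start, R.start_le_cutoff C]
  have hγ : 0 < ε ^ (1 / 5 : ℝ) := by positivity
  have hsplit_left : ε ^ (3 / 10 : ℝ) = ε ^ (1 / 5 : ℝ) * ε ^ (1 / 10 : ℝ) := by
    rw [← rpow_add hε]
    norm_num
  have hsplit_right : ε ^ (1 / 5 : ℝ) * ε ^ (-(1 / 10) : ℝ) = ε ^ (1 / 10 : ℝ) := by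
    rw [← rpow_add hε]
    norm_num
  calc |∫ t in Set.Ioi T, t ^ (-ξ) * scaledWeight χ ε t * u t|
      ≤ _ := S.abs_integral_Ioi_pairing_le hχ hε hξ hξχ hT1 hγ
    _ ≤ 1 / (2 * ε ^ (1 / 5 : ℝ)) * ε ^ (3 / 10 : ℝ)
        + ε ^ (1 / 5 : ℝ) / 2 * (wkbConst χ * ε ^ (-(1 / 10) : ℝ)) := by
        gcongr
        · exact C.integral_Ioi_scaledWeight_le hχ hε
        · exact S.integral_Ioi_cutoff_weight_mul_sq_le R C
    _ = (1 + wkbConst χ) / 2 * ε ^ (1 / 10 : ℝ) := by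
        rw [hsplit_left, ← hsplit_right]
        field_simp
    _ ≤ wkbConst χ * ε ^ (1 / 10 : ℝ) := by
        gcongr
        linarith

theorem integral_pairing_eq_add (S : IsScaledSolution χ κ ε u v) (hε : 0 < ε)
    (hξχ : ξ < χ + 1) {a b : ℝ} (ha : 0 ≤ a) (hab : a ≤ b) (hbT : b ≤ T) :
    ∫ t in Set.Ioi 0, t ^ (-ξ) * scaledWeight χ ε t * u t =
      (∫ t in 0..a, t ^ (-ξ) * scaledWeight χ ε t * u t)
        + (∫ t in a..b, t ^ (-ξ) * scaledWeight χ ε t * u t)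
        + (∫ t in b..T, t ^ (-ξ) * scaledWeight χ ε t * u t)
        + ∫ t in Set.Ioi T, t ^ (-ξ) * scaledWeight χ ε t * u t := by
  have hint := S.integrableOn_rpow_mul_weight_mul (r := -ξ) hε (by linarith)
  have hii {x y : ℝ} (hx : 0 ≤ x) (hxy : x ≤ y) :
      IntervalIntegrable (fun t ↦ t ^ (-ξ) * scaledWeight χ ε t * u t) volume x y := by
    rw [intervalIntegrable_iff_integrableOn_Ioc_of_le hxy]
    exact hint.mono_set fun t ht ↦ lt_of_le_of_lt hx ht.1
  have hb := ha.trans hab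
  rw [intervalIntegral.integral_add_adjacent_intervals (hii le_rfl ha) (hii ha hab),
    intervalIntegral.integral_add_adjacent_intervals (hii le_rfl hb) (hii hb hbT),
    intervalIntegral.integral_interval_add_Ioi' (hii le_rfl (hb.trans hbT))
      (hint.mono_set (Set.Ioi_subset_Ioi (hb.trans hbT)))]

theorem integral_pairing_bounds (R : IsAsymptoticRegime χ κ ε) (S : IsScaledSolution χ κ ε u v)
    (C : IsWKBCutoff χ ε T) (hξ : 0 ≤ ξ) (hξχ : ξ < χ + 1) :
    (4 : ℝ) ^ (-ξ) - (24 * κ + 16 * ξ * (ξ + 1) + (κ + ξ * (ξ + 1) + ξ + 2) * wkbConst χ)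
        * ε ^ (1 / 10 : ℝ) ≤ ∫ t in Set.Ioi 0, t ^ (-ξ) * scaledWeight χ ε t * u t ∧
    ∫ t in Set.Ioi 0, t ^ (-ξ) * scaledWeight χ ε t * u t
      ≤ 8 * (4 : ℝ) ^ (χ + 1 - ξ) + 16 * ξ
        + (24 * κ + 16 * ξ * (ξ + 1) + (κ + ξ * (ξ + 1) + ξ + 2) * wkbConst χ)
          * ε ^ (1 / 10 : ℝ) := by
  obtain ⟨x₁, X⟩ := S.exists_isFirstTurningPoint R
  have hε := R.pos
  have hκ := R.kappa_nonneg
  have hxb : x₁ ≤ ε ^ (-(1 / 2) : ℝ) := X.le_four.trans (R.four_le_start.trans R.start_le)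
  have hbT := C.rpow_neg_half_le hε
  have hpow : (24 * κ + 16 * ξ * (ξ + 1)) * ε ^ (1 / 2 : ℝ)
      ≤ (24 * κ + 16 * ξ * (ξ + 1)) * ε ^ (1 / 10 : ℝ) :=
    mul_le_mul_of_nonneg_left (rpow_le_rpow_of_exponent_ge hε R.le_one (by norm_num))
      (by positivity)
  have hinner_le := S.integral_turningPoint_le R X hξχ
  have hinner_ge := S.rpow_neg_le_integral_turningPoint R X hξ hξχ
  obtain ⟨hmiddle_ge, hmiddle_le⟩ := S.integral_middle_bounds R X hξ hξχ
  obtain ⟨houter_ge, houter_le⟩ := abs_le.1 (S.abs_integral_outer_add_le R C hξ hξχ)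
  obtain ⟨hend_ge, hend_le⟩ := abs_le.1 (S.abs_pairingPrimitive_cutoff_le R C hξ)
  obtain ⟨htail_ge, htail_le⟩ := abs_le.1 (S.abs_integral_Ioi_cutoff_pairing_le R C hξ hξχ)
  rw [S.integral_pairing_eq_add hε hξχ (zero_le_one.trans X.one_le) hxb hbT]
  constructor <;> linarith

theorem eventually_integral_pairing_bounds (hχ : 0 ≤ χ) (hκ : 0 ≤ κ) (hξ : 0 ≤ ξ)
    (hξχ : ξ < χ + 1) :
    ∃ c C : ℝ, 0 < c ∧ 0 < C ∧ ∀ᶠ ε : ℝ in 𝓝[>] 0, ∀ u v, IsScaledSolution χ κ ε u v →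
      c ≤ ∫ t in Set.Ioi 0, t ^ (-ξ) * scaledWeight χ ε t * u t ∧
      ∫ t in Set.Ioi 0, t ^ (-ξ) * scaledWeight χ ε t * u t ≤ C := by
  have h4 : (0 : ℝ) < 4 ^ (-ξ) := by positivity
  set K : ℝ := 24 * κ + 16 * ξ * (ξ + 1) + (κ + ξ * (ξ + 1) + ξ + 2) * wkbConst χ with hK
  refine ⟨4 ^ (-ξ) / 2, 8 * 4 ^ (χ + 1 - ξ) + 16 * ξ + 4 ^ (-ξ) / 2, by positivity,
    by positivity, ?_⟩
  filter_upwards [eventually_isAsymptoticRegime hχ hκ, eventually_exists_isWKBCutoff hχ,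
    eventually_const_mul_rpow_le_one (2 / 4 ^ (-ξ) * K) (show (0 : ℝ) < 1 / 10 by norm_num)]
    with ε R ⟨T, C⟩ hsmall u v S
  have herr : K * ε ^ (1 / 10 : ℝ) ≤ 4 ^ (-ξ) / 2 := by
    rw [div_mul_eq_mul_div, div_mul_eq_mul_div, div_le_one h4] at hsmall
    linarith
  obtain ⟨hge, hle⟩ := S.integral_pairing_bounds R C hξ hξχ
  rw [← hK] at hge hle
  exact ⟨by linarith, by linarith⟩

end IsScaledSolution

end Pairing

/-! ### Convolution with the Laplace kernel -/

section HalfLineIntegrals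

variable {g : ℝ → ℝ}

theorem hasDerivAt_integral_Iic (hg : Continuous g) (hi : ∀ x, IntegrableOn g (Set.Iic x)) (x : ℝ) :
    HasDerivAt (fun x ↦ ∫ y in Set.Iic x, g y) (g x) x := by
  have hsplit : ∀ z, (∫ y in Set.Iic 0, g y) + ∫ y in (0 : ℝ)..z, g y = ∫ y in Set.Iic z, g y :=
    fun z ↦ by rw [← intervalIntegral.integral_Iic_sub_Iic (hi 0) (hi z), add_sub_cancel]
  exact ((hg.integral_hasStrictDerivAt 0 x).hasDerivAt.const_add _).congr_of_eventuallyEq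
    (.of_forall fun z ↦ (hsplit z).symm)

theorem hasDerivAt_integral_Ioi (hg : Continuous g) (hi : ∀ x, IntegrableOn g (Set.Ioi x)) (x : ℝ) :
    HasDerivAt (fun x ↦ ∫ y in Set.Ioi x, g y) (-g x) x := by
  have hsplit : ∀ z, (∫ y in Set.Ioi 0, g y) - ∫ y in (0 : ℝ)..z, g y = ∫ y in Set.Ioi z, g y :=
    fun z ↦ by rw [← intervalIntegral.integral_Ioi_sub_Ioi' (hi 0) (hi z), sub_sub_cancel]
  exact ((hg.integral_hasStrictDerivAt 0 x).hasDerivAt.const_sub _).congr_of_eventuallyEq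
    (.of_forall fun z ↦ (hsplit z).symm)

end HalfLineIntegrals

/-- The convolution of `f` with the Laplace kernel `exp (-|x| / σ)`. -/
noncomputable def laplaceConvolution (σ : ℝ) (f : ℝ → ℝ) (x : ℝ) : ℝ :=
  ∫ y, rexp (-|x - y| / σ) * f y

section LaplaceConvolution

variable {σ : ℝ} {f : ℝ → ℝ}

theorem exp_neg_abs_div_le_one (hσ : 0 < σ) (x : ℝ) : rexp (-|x| / σ) ≤ 1 := by
  rw [exp_le_one_iff, neg_div, neg_nonpos]
  positivity

theorem integrableOn_Iic_exp_mul (hσ : 0 < σ) (hf : Integrable f) (x : ℝ) :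
    IntegrableOn (fun y ↦ rexp (y / σ) * f y) (Set.Iic x) := by
  refine hf.integrableOn.bdd_mul (c := rexp (x / σ)) (by fun_prop) ?_
  filter_upwards [ae_restrict_mem measurableSet_Iic] with y hy
  rw [norm_of_nonneg (exp_pos _).le, exp_le_exp]
  exact div_le_div_of_nonneg_right hy hσ.le

theorem integrableOn_Ioi_exp_neg_mul (hσ : 0 < σ) (hf : Integrable f) (x : ℝ) :
    IntegrableOn (fun y ↦ rexp (-y / σ) * f y) (Set.Ioi x) := by
  refine hf.integrableOn.bdd_mul (c := rexp (-x / σ)) (by fun_prop) ?_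
  filter_upwards [ae_restrict_mem measurableSet_Ioi] with y hy
  rw [norm_of_nonneg (exp_pos _).le, exp_le_exp]
  exact div_le_div_of_nonneg_right (neg_le_neg hy.le) hσ.le

theorem laplaceConvolution_eq (hσ : 0 < σ) (hf : Integrable f) (x : ℝ) :
    laplaceConvolution σ f x =
      rexp (-x / σ) * (∫ y in Set.Iic x, rexp (y / σ) * f y) +
        rexp (x / σ) * ∫ y in Set.Ioi x, rexp (-y / σ) * f y := by
  have hint : Integrable fun y ↦ rexp (-|x - y| / σ) * f y :=
    hf.bdd_mul (c := 1) (by fun_prop) <| .of_forall fun y ↦ by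
      simpa only [norm_of_nonneg (exp_pos _).le] using exp_neg_abs_div_le_one hσ (x - y)
  rw [laplaceConvolution,
    ← intervalIntegral.integral_Iic_add_Ioi (b := x) hint.integrableOn hint.integrableOn,
    ← integral_const_mul, ← integral_const_mul]
  congr 1
  · refine setIntegral_congr_fun measurableSet_Iic fun y hy ↦ ?_
    rw [abs_of_nonneg (sub_nonneg.2 hy), ← mul_assoc, ← exp_add]
    ring_nf
  · refine setIntegral_congr_fun measurableSet_Ioi fun y hy ↦ ?_
    rw [abs_of_neg (sub_neg.2 hy), ← mul_assoc, ← exp_add]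
    ring_nf

/- Up to the factor `2 / σ`, the Laplace kernel is the Green function of `1 / σ ^ 2 - d² / dx²`. -/
theorem exists_hasDerivAt_laplaceConvolution (hσ : 0 < σ) (hf : Continuous f)
    (hfi : Integrable f) :
    ∃ ψ : ℝ → ℝ, ∀ x, HasDerivAt (laplaceConvolution σ f) (ψ x) x ∧
      HasDerivAt ψ (1 / σ ^ 2 * laplaceConvolution σ f x - 2 / σ * f x) x := by
  let l x := ∫ y in Set.Iic x, rexp (y / σ) * f y
  let r x := ∫ y in Set.Ioi x, rexp (-y / σ) * f y
  have hconv : laplaceConvolution σ f = fun x ↦ rexp (-x / σ) * l x + rexp (x / σ) * r x :=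
    funext (laplaceConvolution_eq hσ hfi)
  have hexp_mul (x : ℝ) : rexp (-x / σ) * rexp (x / σ) = 1 := by
    rw [← exp_add, ← add_div, neg_add_cancel, zero_div, exp_zero]
  have hl (x : ℝ) : HasDerivAt (fun x ↦ rexp (-x / σ) * l x)
      (-(1 / σ) * (rexp (-x / σ) * l x) + f x) x :=
    ((hasDerivAt_neg x).div_const σ).exp.mul
      (hasDerivAt_integral_Iic (by fun_prop) (integrableOn_Iic_exp_mul hσ hfi) x)
      |>.congr_deriv (by linear_combination f x * hexp_mul x)
  have hr (x : ℝ) : HasDerivAt (fun x ↦ rexp (x / σ) * r x)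
      (1 / σ * (rexp (x / σ) * r x) - f x) x :=
    ((hasDerivAt_id x).div_const σ).exp.mul
      (hasDerivAt_integral_Ioi (by fun_prop) (integrableOn_Ioi_exp_neg_mul hσ hfi) x)
      |>.congr_deriv (by simp only [id_eq]; linear_combination (-f x) * hexp_mul x)
  refine ⟨fun x ↦ 1 / σ * (rexp (x / σ) * r x - rexp (-x / σ) * l x), fun x ↦ ⟨?_, ?_⟩⟩
  · rw [hconv]
    exact ((hl x).add (hr x)).congr_deriv (by ring)
  · rw [hconv]
    exact (((hr x).sub (hl x)).const_mul (1 / σ)).congr_deriv (by ring)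

theorem tendsto_laplaceConvolution_atTop (hσ : 0 < σ) (hf : Integrable f) :
    Filter.Tendsto (laplaceConvolution σ f) Filter.atTop (𝓝 0) := by
  rw [← integral_zero ℝ ℝ (μ := volume)]
  refine tendsto_integral_filter_of_dominated_convergence (fun y ↦ |f y|)
    (.of_forall fun x ↦ ?_) (.of_forall fun x ↦ .of_forall fun y ↦ ?_) hf.abs
    (.of_forall fun y ↦ ?_)
  · exact (by fun_prop : Continuous fun y ↦ rexp (-|x - y| / σ)).aestronglyMeasurable.mul hf.1
  · rw [norm_mul, norm_of_nonneg (exp_pos _).le]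
    exact mul_le_of_le_one_left (abs_nonneg _) (exp_neg_abs_div_le_one hσ _)
  · have hdist : Filter.Tendsto (fun x : ℝ ↦ |x - y| / σ) Filter.atTop Filter.atTop :=
      (Filter.tendsto_abs_atTop_atTop.comp
        (Filter.tendsto_atTop_add_const_right _ (-y) Filter.tendsto_id)).atTop_div_const hσ
    simpa only [Function.comp_def, neg_div, zero_mul] using
      (tendsto_exp_neg_atTop_nhds_zero.comp hdist).mul_const (f y)

end LaplaceConvolution

/-! ### Odd eigenfunctions -/

/-- `φ` is an odd eigenfunction of the Laplace kernel of width `σ` for the positive eigenvalue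
`lam`, normalized in `L²` of the data density. -/
structure IsNormalizedOddEigenpair (χ σ lam : ℝ) (φ : ℝ → ℝ) : Prop where
  pos : 0 < lam
  continuous : Continuous φ
  integrable : Integrable fun y ↦ dataDensity χ y * |φ y|
  eigen : ∀ x, lam * φ x = ∫ y, dataDensity χ y * rexp (-|x - y| / σ) * φ y
  odd : ∀ x, φ (-x) = -φ x
  norm_eq_one : ∫ x, dataDensity χ x * φ x ^ 2 = 1

/-- The length `ℓ` on which an odd eigenfunction with eigenvalue `lam` varies near the origin: it
is chosen so that `x = ℓ * t` turns the coefficient `2 * p x / (σ * lam)` of the eigenvalue equation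
into the weight `t ^ χ * exp (-(ℓ * t) ^ 2)`. -/
noncomputable def lengthScale (χ σ lam : ℝ) : ℝ :=
  (σ * lam * Real.Gamma ((1 + χ) / 2) / 2) ^ (1 / (χ + 2))

section DataDensity

variable {χ ℓ t : ℝ}

theorem gamma_half_one_add_pos (hχ : 0 ≤ χ) : 0 < Real.Gamma ((1 + χ) / 2) :=
  Gamma_pos_of_pos (by positivity)

theorem continuous_dataDensity (hχ : 0 ≤ χ) : Continuous (dataDensity χ) := by
  have : Continuous fun t : ℝ ↦ |t| ^ χ := (continuous_rpow_const hχ).comp continuous_abs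
  unfold dataDensity
  fun_prop

theorem dataDensity_nonneg (hχ : 0 ≤ χ) (x : ℝ) : 0 ≤ dataDensity χ x := by
  have := gamma_half_one_add_pos hχ
  unfold dataDensity
  positivity

theorem dataDensity_abs (x : ℝ) : dataDensity χ |x| = dataDensity χ x := by
  rw [dataDensity, dataDensity, abs_abs, sq_abs]

theorem dataDensity_mul (hℓ : 0 < ℓ) (ht : 0 ≤ t) :
    dataDensity χ (ℓ * t) = ℓ ^ χ / Real.Gamma ((1 + χ) / 2) * scaledWeight χ (ℓ ^ 2) t := by
  rw [dataDensity, scaledWeight, abs_of_nonneg (by positivity), mul_rpow hℓ.le ht, mul_pow]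
  ring

theorem integral_dataDensity_mul_comp_abs (hℓ : 0 < ℓ) (F : ℝ → ℝ) :
    ∫ x, dataDensity χ x * F |x| = 2 * ℓ ^ (χ + 1) / Real.Gamma ((1 + χ) / 2) *
      ∫ t in Set.Ioi 0, scaledWeight χ (ℓ ^ 2) t * F (ℓ * t) := by
  have hscale : ∫ y in Set.Ioi 0, dataDensity χ y * F y =
      ℓ * ∫ t in Set.Ioi 0, dataDensity χ (ℓ * t) * F (ℓ * t) := by
    simpa only [mul_zero, smul_eq_mul] using
      (integral_comp_mul_left_Ioi' (fun y ↦ dataDensity χ y * F y) 0 hℓ).symm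
  have hweight : ∫ t in Set.Ioi 0, dataDensity χ (ℓ * t) * F (ℓ * t) =
      ℓ ^ χ / Real.Gamma ((1 + χ) / 2) *
        ∫ t in Set.Ioi 0, scaledWeight χ (ℓ ^ 2) t * F (ℓ * t) := by
    rw [← integral_const_mul]
    refine setIntegral_congr_fun measurableSet_Ioi fun t ht ↦ ?_
    rw [dataDensity_mul hℓ (le_of_lt ht), mul_assoc]
  calc ∫ x, dataDensity χ x * F |x| = ∫ x, (fun y ↦ dataDensity χ y * F y) |x| := by
        simp only [dataDensity_abs]
    _ = 2 * ∫ y in Set.Ioi 0, dataDensity χ y * F y :=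
        integral_comp_abs (f := fun y ↦ dataDensity χ y * F y)
    _ = _ := by rw [hscale, hweight, rpow_add_one hℓ.ne']; ring

end DataDensity

section LengthScale

variable {χ σ lam : ℝ}

theorem lengthScale_pos (hχ : 0 ≤ χ) (hσ : 0 < σ) (hlam : 0 < lam) : 0 < lengthScale χ σ lam := by
  have := gamma_half_one_add_pos hχ
  unfold lengthScale
  positivity

theorem lengthScale_rpow (hχ : 0 ≤ χ) (hσ : 0 < σ) (hlam : 0 < lam) (e : ℝ) :
    lengthScale χ σ lam ^ e =
      (σ * Real.Gamma ((1 + χ) / 2) / 2) ^ (e / (χ + 2)) * lam ^ (e / (χ + 2)) := by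
  have := gamma_half_one_add_pos hχ
  rw [lengthScale, ← rpow_mul (by positivity), ← mul_rpow (by positivity) hlam.le]
  ring_nf

theorem two_div_mul_dataDensity_lengthScale_mul (hχ : 0 ≤ χ) (hσ : 0 < σ) (hlam : 0 < lam)
    {t : ℝ} (ht : 0 ≤ t) :
    lengthScale χ σ lam ^ 2 * (2 / (σ * lam) * dataDensity χ (lengthScale χ σ lam * t)) =
      scaledWeight χ (lengthScale χ σ lam ^ 2) t := by
  have := gamma_half_one_add_pos hχ
  have hℓ := lengthScale_pos hχ hσ hlam
  have hpow : lengthScale χ σ lam ^ χ * lengthScale χ σ lam ^ 2 =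
      σ * Real.Gamma ((1 + χ) / 2) / 2 * lam := by
    rw [← rpow_two, ← rpow_add hℓ, lengthScale_rpow hχ hσ hlam, div_self (by positivity),
      rpow_one, rpow_one]
  rw [dataDensity_mul hℓ ht]
  field_simp
  linear_combination (2 * scaledWeight χ (lengthScale χ σ lam ^ 2) t) * hpow

theorem tendsto_sq_lengthScale (hχ : 0 ≤ χ) (hσ : 0 < σ) :
    Filter.Tendsto (fun lam ↦ lengthScale χ σ lam ^ 2) (𝓝[>] 0) (𝓝[>] 0) := by
  refine tendsto_nhdsWithin_iff.2 ⟨?_, ?_⟩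
  · have hχ2 : 0 < 1 / (χ + 2) := by positivity
    have hcont : Continuous fun lam ↦ lengthScale χ σ lam ^ 2 := by
      unfold lengthScale
      exact ((continuous_rpow_const hχ2.le).comp (by fun_prop)).pow 2
    have hzero : lengthScale χ σ 0 ^ 2 = 0 := by
      rw [lengthScale, mul_zero, zero_mul, zero_div, zero_rpow hχ2.ne', zero_pow two_ne_zero]
    simpa only [hzero] using (hcont.tendsto 0).mono_left nhdsWithin_le_nhds
  · filter_upwards [self_mem_nhdsWithin] with lam hlam
    exact pow_pos (lengthScale_pos hχ hσ hlam) 2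

end LengthScale

theorem IsOscillator.rescale {Q φ ψ : ℝ → ℝ} (S : IsOscillator Q φ ψ Set.univ) {ℓ s : ℝ}
    (hℓ : ℓ ≠ 0) :
    IsOscillator (fun t ↦ ℓ ^ 2 * Q (ℓ * t)) (fun t ↦ φ (ℓ * t) / (s * ℓ))
      (fun t ↦ ψ (ℓ * t) / s) Set.univ where
  hasDerivAt_fst t _ := by
    refine (((S.hasDerivAt_fst (ℓ * t) trivial).comp t
      (hasDerivAt_const_mul ℓ)).div_const (s * ℓ)).congr_deriv ?_
    rw [mul_div_mul_right _ _ hℓ]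
  hasDerivAt_snd t _ := by
    refine (((S.hasDerivAt_snd (ℓ * t) trivial).comp t
      (hasDerivAt_const_mul ℓ)).div_const s).congr_deriv ?_
    field_simp

namespace IsNormalizedOddEigenpair

variable {χ σ lam : ℝ} {φ : ℝ → ℝ}

theorem apply_zero (H : IsNormalizedOddEigenpair χ σ lam φ) : φ 0 = 0 := by
  have := H.odd 0
  rw [neg_zero] at this
  linarith

theorem integrable_mul (H : IsNormalizedOddEigenpair χ σ lam φ) (hχ : 0 ≤ χ) :
    Integrable fun y ↦ dataDensity χ y * φ y := by
  refine H.integrable.mono'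
    ((continuous_dataDensity hχ).mul H.continuous).aestronglyMeasurable (.of_forall fun y ↦ ?_)
  rw [norm_mul, norm_of_nonneg (dataDensity_nonneg hχ y), norm_eq_abs]

theorem laplaceConvolution_eq (H : IsNormalizedOddEigenpair χ σ lam φ) :
    laplaceConvolution σ (fun y ↦ dataDensity χ y * φ y) = fun x ↦ lam * φ x := by
  funext x
  rw [H.eigen, laplaceConvolution]
  congr! 2 with y
  ring

theorem exists_isOscillator (H : IsNormalizedOddEigenpair χ σ lam φ) (hχ : 0 ≤ χ) (hσ : 0 < σ) :
    ∃ ψ, IsOscillator (fun x ↦ 2 / (σ * lam) * dataDensity χ x - 1 / σ ^ 2) φ ψ Set.univ := by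
  obtain ⟨ψ, hψ⟩ := exists_hasDerivAt_laplaceConvolution hσ
    (f := fun y ↦ dataDensity χ y * φ y) ((continuous_dataDensity hχ).mul H.continuous)
    (H.integrable_mul hχ)
  rw [H.laplaceConvolution_eq] at hψ
  have hlam := H.pos
  refine ⟨fun x ↦ lam⁻¹ * ψ x, fun x _ ↦ ?_, fun x _ ↦ ?_⟩
  · simpa only [inv_mul_cancel_left₀ hlam.ne'] using (hψ x).1.const_mul lam⁻¹
  · refine ((hψ x).2.const_mul lam⁻¹).congr_deriv ?_
    field_simp
    ring

theorem tendsto_atTop (H : IsNormalizedOddEigenpair χ σ lam φ) (hχ : 0 ≤ χ) (hσ : 0 < σ) :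
    Filter.Tendsto φ Filter.atTop (𝓝 0) := by
  have hlim := (tendsto_laplaceConvolution_atTop hσ (H.integrable_mul hχ)).const_mul lam⁻¹
  rw [H.laplaceConvolution_eq] at hlim
  simpa only [inv_mul_cancel_left₀ H.pos.ne', mul_zero] using hlim

theorem slope_ne_zero (H : IsNormalizedOddEigenpair χ σ lam φ) (hχ : 0 ≤ χ) {ψ : ℝ → ℝ}
    (S : IsOscillator (fun x ↦ 2 / (σ * lam) * dataDensity χ x - 1 / σ ^ 2) φ ψ Set.univ) :
    ψ 0 ≠ 0 := by
  intro hψ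
  have hright : ∀ x, 0 ≤ x → φ x = 0 := fun x hx ↦
    (S.mono (Set.subset_univ (Set.Icc 0 x))).eq_zero_of_initial_eq_zero
      (((continuous_dataDensity hχ).const_mul _).sub continuous_const).continuousOn
      H.apply_zero hψ x ⟨hx, le_rfl⟩
  have hzero : ∀ x, φ x = 0 := fun x ↦ by
    rcases le_total 0 x with hx | hx
    · exact hright x hx
    · rw [← neg_eq_zero, ← H.odd, hright (-x) (neg_nonneg.2 hx)]
  simpa [hzero] using H.norm_eq_one

theorem exists_isScaledSolution (H : IsNormalizedOddEigenpair χ σ lam φ) (hχ : 0 ≤ χ)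
    (hσ : 0 < σ) :
    ∃ s u v, IsScaledSolution χ (1 / σ ^ 2) (lengthScale χ σ lam ^ 2) u v ∧
      ∀ t, φ (lengthScale χ σ lam * t) = s * u t := by
  obtain ⟨ψ, S⟩ := H.exists_isOscillator hχ hσ
  have hs := H.slope_ne_zero hχ S
  have hℓ := lengthScale_pos hχ hσ H.pos
  have hosc := S.rescale (s := ψ 0) hℓ.ne'
  refine ⟨ψ 0 * lengthScale χ σ lam, fun t ↦ φ (lengthScale χ σ lam * t) /
    (ψ 0 * lengthScale χ σ lam), fun t ↦ ψ (lengthScale χ σ lam * t) / ψ 0,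
    ⟨⟨fun t _ ↦ hosc.hasDerivAt_fst t trivial, fun t ht ↦ ?_⟩, ?_, ?_, ?_⟩, fun t ↦ ?_⟩
  · refine (hosc.hasDerivAt_snd t trivial).congr_deriv ?_
    rw [mul_sub, two_div_mul_dataDensity_lengthScale_mul hχ hσ H.pos ht, mul_comm (1 / σ ^ 2)]
  · rw [mul_zero, H.apply_zero, zero_div]
  · rw [mul_zero, div_self hs]
  · simpa only [zero_div, Function.comp_def, id_eq] using
      ((H.tendsto_atTop hχ hσ).comp (Filter.tendsto_id.const_mul_atTop hℓ)).div_const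
        (ψ 0 * lengthScale χ σ lam)
  · rw [mul_div_cancel₀ _ (mul_ne_zero hs hℓ.ne')]

end IsNormalizedOddEigenpair

section OddFunction

variable {χ ξ ℓ s : ℝ} {φ u : ℝ → ℝ}

theorem integral_dataDensity_mul_sq (hodd : ∀ x, φ (-x) = -φ x) (hℓ : 0 < ℓ)
    (hu : ∀ t, φ (ℓ * t) = s * u t) :
    ∫ x, dataDensity χ x * φ x ^ 2 = 2 * ℓ ^ (χ + 1) / Real.Gamma ((1 + χ) / 2) * s ^ 2 *
      ∫ t in Set.Ioi 0, scaledWeight χ (ℓ ^ 2) t * u t ^ 2 := by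
  have heven : ∀ x, φ x ^ 2 = φ |x| ^ 2 := fun x ↦ by
    rcases abs_choice x with h | h <;> rw [h]
    rw [hodd, neg_sq]
  calc ∫ x, dataDensity χ x * φ x ^ 2 = ∫ x, dataDensity χ x * φ |x| ^ 2 := by
        simp only [← heven]
    _ = 2 * ℓ ^ (χ + 1) / Real.Gamma ((1 + χ) / 2) *
          ∫ t in Set.Ioi 0, scaledWeight χ (ℓ ^ 2) t * φ (ℓ * t) ^ 2 :=
        integral_dataDensity_mul_comp_abs hℓ fun y ↦ φ y ^ 2
    _ = _ := by simp only [hu, mul_pow, mul_left_comm _ (s ^ 2), integral_const_mul, mul_assoc]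

theorem integral_dataDensity_mul_targetFun_mul (hodd : ∀ x, φ (-x) = -φ x) (hℓ : 0 < ℓ)
    (hu : ∀ t, φ (ℓ * t) = s * u t) :
    ∫ x, dataDensity χ x * targetFun ξ x * φ x =
      2 * ℓ ^ (χ + 1) / Real.Gamma ((1 + χ) / 2) * (ℓ ^ (-ξ) * s) *
        ∫ t in Set.Ioi 0, t ^ (-ξ) * scaledWeight χ (ℓ ^ 2) t * u t := by
  have heven : ∀ x, targetFun ξ x * φ x = |x| ^ (-ξ) * φ |x| := fun x ↦ by
    rw [targetFun]
    rcases lt_trichotomy x 0 with h | rfl | h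
    · rw [sign_of_neg h, abs_of_neg h, hodd]; ring
    · rw [abs_zero, neg_eq_self.1 ((hodd 0).symm.trans (by rw [neg_zero])), mul_zero, mul_zero]
    · rw [sign_of_pos h, one_mul, abs_of_pos h]
  simp only [mul_assoc (dataDensity χ _), heven]
  rw [integral_dataDensity_mul_comp_abs hℓ fun y ↦ y ^ (-ξ) * φ y, mul_assoc _ (ℓ ^ (-ξ) * s),
    ← integral_const_mul (ℓ ^ (-ξ) * s)]
  congr 1
  refine setIntegral_congr_fun measurableSet_Ioi fun t ht ↦ ?_
  rw [hu, mul_rpow hℓ.le (le_of_lt ht)]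
  ring

end OddFunction

/- The normalization determines the factor `s` up to sign, so `s` drops out of the coefficient. -/
theorem IsNormalizedOddEigenpair.abs_coefficient_eq {χ σ lam ξ ℓ s : ℝ} {φ u : ℝ → ℝ}
    (H : IsNormalizedOddEigenpair χ σ lam φ) (hχ : 0 ≤ χ) (hℓ : 0 < ℓ)
    (hu : ∀ t, φ (ℓ * t) = s * u t) :
    |∫ x, dataDensity χ x * targetFun ξ x * φ x| =
      √(2 / Real.Gamma ((1 + χ) / 2)) * ℓ ^ (3 * χ / 4 + 1 - ξ) *
        (|∫ t in Set.Ioi 0, t ^ (-ξ) * scaledWeight χ (ℓ ^ 2) t * u t| /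
          √((ℓ ^ 2) ^ ((χ + 2) / 4) * ∫ t in Set.Ioi 0, scaledWeight χ (ℓ ^ 2) t * u t ^ 2)) := by
  have hΓ := gamma_half_one_add_pos hχ
  have hnorm := H.norm_eq_one
  rw [integral_dataDensity_mul_sq H.odd hℓ hu] at hnorm
  rw [integral_dataDensity_mul_targetFun_mul H.odd hℓ hu]
  set N := ∫ t in Set.Ioi 0, scaledWeight χ (ℓ ^ 2) t * u t ^ 2
  set I := ∫ t in Set.Ioi 0, t ^ (-ξ) * scaledWeight χ (ℓ ^ 2) t * u t
  set Γ := Real.Gamma ((1 + χ) / 2)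
  have hN : 0 < N := by
    by_contra! hN
    have : 2 * ℓ ^ (χ + 1) / Γ * s ^ 2 * N ≤ 0 :=
      mul_nonpos_of_nonneg_of_nonpos (by positivity) hN
    linarith
  have hpow : ℓ ^ (χ + 1) * (ℓ ^ (-ξ)) ^ 2 * (ℓ ^ 2) ^ ((χ + 2) / 4) =
      (ℓ ^ (3 * χ / 4 + 1 - ξ)) ^ 2 := by
    simp only [← rpow_two, ← rpow_mul hℓ.le, ← rpow_add hℓ]
    ring_nf
  rw [← abs_of_nonneg (a := √(2 / Γ) * _ * _) (by positivity), ← sq_eq_sq_iff_abs_eq_abs]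
  simp only [mul_pow, div_pow, sq_abs, sq_sqrt (by positivity : 0 ≤ 2 / Γ),
    sq_sqrt (by positivity : 0 ≤ (ℓ ^ 2) ^ ((χ + 2) / 4) * N)]
  field_simp at hnorm hpow ⊢
  linear_combination
    (ℓ ^ (χ + 1) * (ℓ ^ (-ξ)) ^ 2 * (ℓ ^ 2) ^ ((χ + 2) / 4) * I ^ 2) * hnorm + Γ * I ^ 2 * hpow

section Scaling

variable {χ ξ σ : ℝ}

theorem eventually_abs_coefficient_bounds (hχ : 0 ≤ χ) (hξ0 : 0 ≤ ξ) (hξ : ξ < χ + 1)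
    (hσ : 0 < σ) :
    ∃ c C : ℝ, 0 < c ∧ ∀ᶠ lam in 𝓝[>] 0, ∀ φ, IsNormalizedOddEigenpair χ σ lam φ →
      c * lam ^ ((3 * χ / 4 + 1 - ξ) / (χ + 2))
          ≤ |∫ x, dataDensity χ x * targetFun ξ x * φ x| ∧
        |∫ x, dataDensity χ x * targetFun ξ x * φ x|
          ≤ C * lam ^ ((3 * χ / 4 + 1 - ξ) / (χ + 2)) := by
  have hκ : 0 ≤ 1 / σ ^ 2 := by positivity
  obtain ⟨cN, CN, hcN, hCN, hnorm⟩ :=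
    IsScaledSolution.eventually_integral_weight_mul_sq_bounds hχ hκ
  obtain ⟨cI, CI, hcI, -, hpairing⟩ :=
    IsScaledSolution.eventually_integral_pairing_bounds hχ hκ hξ0 hξ
  have := gamma_half_one_add_pos hχ
  let K := √(2 / Real.Gamma ((1 + χ) / 2)) *
    (σ * Real.Gamma ((1 + χ) / 2) / 2) ^ ((3 * χ / 4 + 1 - ξ) / (χ + 2))
  refine ⟨K * (cI / √CN), K * (CI / √cN), by positivity, ?_⟩
  filter_upwards [(tendsto_sq_lengthScale hχ hσ).eventually (hnorm.and hpairing)]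
    with lam ⟨hnorm, hpairing⟩ φ H
  obtain ⟨s, u, v, S, hu⟩ := H.exists_isScaledSolution hχ hσ
  obtain ⟨hnorm_ge, hnorm_le⟩ := hnorm u v S
  obtain ⟨hpairing_ge, hpairing_le⟩ := hpairing u v S
  have hlam := H.pos
  have hpairing_pos := hcI.trans_le hpairing_ge
  rw [H.abs_coefficient_eq hχ (lengthScale_pos hχ hσ hlam) hu, lengthScale_rpow hχ hσ hlam,
    ← mul_assoc, mul_right_comm K (cI / √CN), mul_right_comm K (CI / √cN),
    abs_of_pos hpairing_pos]
  have hCI : 0 ≤ CI := hpairing_pos.le.trans hpairing_le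
  have hnorm_pos := hcN.trans_le hnorm_ge
  constructor <;> gcongr

theorem coefficient_scaling_odd_eigenfunction_general (hχ : 0 ≤ χ) (hξ0 : 0 ≤ ξ)
    (hξ : ξ < χ + 1) (hσ : 0 < σ) :
    ∃ c C lam₀ : ℝ, 0 < c ∧ c ≤ C ∧ 0 < lam₀ ∧
      ∀ lam φ, lam < lam₀ → IsNormalizedOddEigenpair χ σ lam φ →
        c * lam ^ ((3 * χ / 4 + 1 - ξ) / (χ + 2))
            ≤ |∫ x, dataDensity χ x * targetFun ξ x * φ x| ∧
        |∫ x, dataDensity χ x * targetFun ξ x * φ x|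
            ≤ C * lam ^ ((3 * χ / 4 + 1 - ξ) / (χ + 2)) := by
  obtain ⟨c, C, hc, hbounds⟩ := eventually_abs_coefficient_bounds hχ hξ0 hξ hσ
  obtain ⟨lam₀, hlam₀, hsub⟩ := mem_nhdsGT_iff_exists_Ioo_subset.1 hbounds
  refine ⟨c, max c C, lam₀, hc, le_max_left c C, hlam₀, fun lam φ hlt H ↦ ?_⟩
  obtain ⟨hge, hle⟩ := hsub ⟨H.pos, hlt⟩ φ H
  have hlam := H.pos
  exact ⟨hge, hle.trans (by gcongr; exact le_max_right c C)⟩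

end Scaling

/-- For small eigenvalues `λ`, the coefficient of a normalized odd
eigenfunction of the Laplace kernel against the target scales as
`λ^{(3χ/4 + 1 - ξ)/(χ+2)}`. -/
theorem coefficient_scaling_odd_eigenfunction
    (χ ξ σ : ℝ) (hχ : 0 ≤ χ) (hξ0 : 0 ≤ ξ) (hξ : ξ < (χ + 1) / 2) (hσ : 0 < σ) :
    ∃ c C lam₀ : ℝ, 0 < c ∧ c ≤ C ∧ 0 < lam₀ ∧
      ∀ (lam : ℝ) (φ : ℝ → ℝ), 0 < lam → lam < lam₀ →
        Continuous φ →
        Integrable (fun y => dataDensity χ y * |φ y|) →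
        (∀ x : ℝ, lam * φ x = ∫ y : ℝ, dataDensity χ y * Real.exp (-|x - y| / σ) * φ y) →
        (∀ x : ℝ, φ (-x) = -φ x) →
        (∫ x : ℝ, dataDensity χ x * φ x ^ 2) = 1 →
        c * lam ^ ((3 * χ / 4 + 1 - ξ) / (χ + 2))
            ≤ |∫ x : ℝ, dataDensity χ x * targetFun ξ x * φ x| ∧
        |∫ x : ℝ, dataDensity χ x * targetFun ξ x * φ x|
            ≤ C * lam ^ ((3 * χ / 4 + 1 - ξ) / (χ + 2)) := by
  obtain ⟨c, C, lam₀, hc, hcC, hlam₀, hbounds⟩ :=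
    coefficient_scaling_odd_eigenfunction_general hχ hξ0 (by linarith : ξ < χ + 1) hσ
  exact ⟨c, C, lam₀, hc, hcC, hlam₀, fun lam φ hpos hlt hcont hint heigen hodd hnorm ↦
    hbounds lam φ hlt ⟨hpos, hcont, hint, heigen, hodd, hnorm⟩⟩
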